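/- Let d₁, d₂ ≥ 1 be integers, s > 0 and V > 0. For every pair of bounded nonempty open connected sets Ω₁ ⊆ ℝ^{d₁}, Ω₂ ⊆ ℝ^{d₂} with |Ω₁||Ω₂| = V, one has λ₁(Ω₁ × Ω₂) ≥ μ₁(B₂)^{1/(s+1)} · V^{-2/(d₁+(1+s)d₂)} · E₁(1, ℝ^{d₁}) · ( τ_{d₁}^{2s/d₁} · d₂ μ₁(B₁) / ((d₁+s d₂) μ₁(B₂)) )^{ d₁ / ((s+1)(d₁+(1+s)d₂)) }. -/

import Mathlib

open MeasureTheory Set Filter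

/-- `τ_d = π^{d/2}/Γ(1+d/2)`, the volume of the unit ball in `ℝ^d`. -/
noncomputable def tau (d : ℕ) : ℝ := Real.pi ^ ((d : ℝ) / 2) / Real.Gamma (1 + (d : ℝ) / 2)

/-- First Dirichlet eigenvalue (Rayleigh quotient infimum) of the Laplacian on `Ω ⊆ ℝ^d`. -/
noncomputable def dirichletMu1 (d : ℕ) (Ω : Set (EuclideanSpace ℝ (Fin d))) : ℝ :=
  sInf { q : ℝ | ∃ g : EuclideanSpace ℝ (Fin d) → ℝ,
    ContDiff ℝ (⊤ : ℕ∞) g ∧ HasCompactSupport g ∧ tsupport g ⊆ Ω ∧ g ≠ 0 ∧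
    q = (∫ x in Ω, ‖gradient g x‖ ^ 2) / (∫ x in Ω, (g x) ^ 2) }

/-- First eigenvalue (Rayleigh quotient infimum) of the Schrödinger operator
`-Δ + σ |x|^{2s}` on `Ω ⊆ ℝ^d`. -/
noncomputable def schrodingerE1 (d : ℕ) (s σ : ℝ) (Ω : Set (EuclideanSpace ℝ (Fin d))) : ℝ :=
  sInf { q : ℝ | ∃ f : EuclideanSpace ℝ (Fin d) → ℝ,
    ContDiff ℝ (⊤ : ℕ∞) f ∧ HasCompactSupport f ∧ tsupport f ⊆ Ω ∧ f ≠ 0 ∧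
    q = (∫ x in Ω, (‖gradient f x‖ ^ 2 + σ * ‖x‖ ^ (2 * s) * (f x) ^ 2)) /
        (∫ x in Ω, (f x) ^ 2) }

/-- First eigenvalue (Rayleigh quotient infimum) of the Grushin operator with Dirichlet
conditions on `Ω ⊆ ℝ^{d₁} × ℝ^{d₂}`. -/
noncomputable def grushinLambda1 (d₁ d₂ : ℕ) (s : ℝ)
    (Ω : Set (EuclideanSpace ℝ (Fin d₁) × EuclideanSpace ℝ (Fin d₂))) : ℝ :=
  sInf { q : ℝ | ∃ u : EuclideanSpace ℝ (Fin d₁) × EuclideanSpace ℝ (Fin d₂) → ℝ,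
    ContDiff ℝ (⊤ : ℕ∞) u ∧ HasCompactSupport u ∧ tsupport u ⊆ Ω ∧ u ≠ 0 ∧
    q = (∫ x in Ω, (‖gradient (fun y => u (y, x.2)) x.1‖ ^ 2
          + ‖x.1‖ ^ (2 * s) * ‖gradient (fun y => u (x.1, y)) x.2‖ ^ 2)) /
        (∫ x in Ω, (u x) ^ 2) }

open scoped ENNReal NNReal Topology Pointwise Convolution

/-! Freezing one variable of a test function reduces `λ₁(Ω₁ × Ω₂)` to the Schrödinger eigenvalue
`E₁(σ, Ω₁)` with coupling `σ = μ₁(Ω₂)`. As a function of `σ` it is concave, at least `μ₁(Ω₁)`, and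
at least `E₁(σ, ℝ^{d₁}) = σ^{1/(s+1)} E₁(1, ℝ^{d₁})`. Interpolating between the two lower bounds
gives `E₁(σ, Ω₁) ≥ σ^p τ^{1/(s+1) - p} E₁(1, ℝ^{d₁})`, where `τ` comes from testing `E₁` on the ball
of volume `|Ω₁|`. Faber–Krahn bounds `μ₁(Ω₂)`, and `p = d₂ / (d₁ + (1 + s) d₂)` is the exponent for
which only the product `|Ω₁| |Ω₂|` survives.

Faber–Krahn is the Pólya–Szegő inequality for the decreasing rearrangement, which follows from
quadratic sup-convolutions with parameter `c → ∞`: by Brunn–Minkowski (a case of Prékopa–Leindler)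
rearrangement does not increase the integral of the sup-convolution, and the excess of the
sup-convolution over `g` is `‖∇g‖² / (4c)` to first order. -/

theorem lintegral_eq_lintegral_superlevel {X : Type*} [MeasurableSpace X] {μ : Measure X}
    [SFinite μ] {f : X → ℝ≥0∞} (hf : Measurable f) :
    ∫⁻ x, f x ∂μ = ∫⁻ t in Ioi (0 : ℝ), μ {x | ENNReal.ofReal t < f x} := by
  have hmeas : MeasurableSet {p : X × ℝ | ENNReal.ofReal p.2 < f p.1} :=
    measurableSet_lt (by fun_prop) (by fun_prop)
  have hslice (y : ℝ≥0∞) : volume.restrict (Ioi 0) {t : ℝ | ENNReal.ofReal t < y} = y := by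
    rw [Measure.restrict_apply (measurableSet_lt (by fun_prop) (by fun_prop))]
    induction y with
    | top => simp
    | coe y =>
      have : {t : ℝ | ENNReal.ofReal t < y} ∩ Ioi 0 = Ioo 0 (y : ℝ) := by
        ext t
        simp only [mem_inter_iff, mem_ofPred_eq, mem_Ioi, mem_Ioo, and_comm (b := 0 < t),
          and_congr_right_iff]
        intro ht
        rw [← ENNReal.ofReal_coe_nnreal, ENNReal.ofReal_lt_ofReal_iff_of_nonneg ht.le]
      rw [this, Real.volume_Ioo, sub_zero, ENNReal.ofReal_coe_nnreal]
  calc ∫⁻ x, f x ∂μ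
      = ∫⁻ x, volume.restrict (Ioi 0) {t : ℝ | ENNReal.ofReal t < f x} ∂μ := by
        simp only [hslice]
    _ = (μ.prod (volume.restrict (Ioi 0))) {p : X × ℝ | ENNReal.ofReal p.2 < f p.1} :=
        (Measure.prod_apply hmeas).symm
    _ = ∫⁻ t in Ioi (0 : ℝ), μ {x | ENNReal.ofReal t < f x} := Measure.prod_apply_symm hmeas

theorem ennreal_geom_mean_le_arith_mean2_weighted {α β : ℝ} (hα : 0 < α) (hβ : 0 < β)
    (hαβ : α + β = 1) (a b : ℝ≥0∞) :
    a ^ α * b ^ β ≤ ENNReal.ofReal α * a + ENNReal.ofReal β * b := by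
  have hconj : α⁻¹.HolderConjugate β⁻¹ := by
    rw [Real.holderConjugate_iff]
    refine ⟨(one_lt_inv₀ hα).2 (by linarith), by simpa using hαβ⟩
  refine (ENNReal.young_inequality (a ^ α) (b ^ β) hconj).trans_eq ?_
  rw [← ENNReal.rpow_mul, ← ENNReal.rpow_mul, mul_inv_cancel₀ hα.ne', mul_inv_cancel₀ hβ.ne',
    ENNReal.rpow_one, ENNReal.rpow_one, ENNReal.ofReal_inv_of_pos hα, ENNReal.ofReal_inv_of_pos hβ,
    ENNReal.div_eq_inv_mul, ENNReal.div_eq_inv_mul, inv_inv, inv_inv]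

theorem tendsto_lintegral_min_natCast {X : Type*} [MeasurableSpace X] {μ : Measure X}
    {k : X → ℝ≥0∞} (hk : Measurable k) :
    Tendsto (fun n : ℕ => ∫⁻ x, min (k x) n ∂μ) atTop (𝓝 (∫⁻ x, k x ∂μ)) := by
  refine lintegral_tendsto_of_tendsto_of_monotone
    (fun n => (hk.min measurable_const).aemeasurable)
    (Eventually.of_forall fun x m n hmn => by dsimp only; gcongr)
    (Eventually.of_forall fun x => ?_)
  simpa using tendsto_const_nhds.min ENNReal.tendsto_nat_nhds_top

theorem volume_add_le_volume_add_of_isCompact {K L : Set ℝ} (hK : IsCompact K) (hL : IsCompact L)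
    (hKn : K.Nonempty) (hLn : L.Nonempty) : volume K + volume L ≤ volume (K + L) := by
  obtain ⟨a, haK, ha⟩ := hK.exists_isGreatest hKn
  obtain ⟨b, hbL, hb⟩ := hL.exists_isLeast hLn
  -- The translates `K + b` and `a + L` lie on either side of `a + b`.
  have hdisj : AEDisjoint volume ((· + b) '' K) ((a + ·) '' L) := by
    refine measure_mono_null (t := {a + b}) ?_ Real.volume_singleton
    rintro _ ⟨⟨x, hx, rfl⟩, y, hy, hxy⟩
    have hxa := ha hx
    have hby := hb hy
    simp only [mem_singleton_iff] at hxy ⊢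
    linarith
  have hmeas : MeasurableSet ((a + ·) '' L) := (hL.image (by fun_prop)).measurableSet
  calc volume K + volume L
      = volume ((· + b) '' K) + volume ((a + ·) '' L) := by
        simp only [image_add_right, image_add_left, measure_preimage_add_right,
          measure_preimage_add]
    _ = volume ((· + b) '' K ∪ (a + ·) '' L) :=
        (measure_union₀ hmeas.nullMeasurableSet hdisj).symm
    _ ≤ volume (K + L) := by
        refine measure_mono (union_subset ?_ ?_)
        · exact image_subset_iff.2 fun x hx => add_mem_add hx hbL
        · exact image_subset_iff.2 fun y hy => add_mem_add haK hy

theorem volume_add_le_volume_add {A B : Set ℝ} (hA : MeasurableSet A) (hB : MeasurableSet B)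
    (hAn : A.Nonempty) (hBn : B.Nonempty) : volume A + volume B ≤ volume (A + B) := by
  obtain ⟨a, ha⟩ := hAn
  obtain ⟨b, hb⟩ := hBn
  rw [hA.measure_eq_iSup_isCompact, hB.measure_eq_iSup_isCompact]
  simp only [iSup_and']
  refine ENNReal.biSup_add_biSup_le' (p := fun K => K ⊆ A ∧ IsCompact K)
    (q := fun L => L ⊆ B ∧ IsCompact L) ⟨∅, by simp⟩ ⟨∅, by simp⟩ ?_
  rintro K ⟨hKA, hK⟩ L ⟨hLB, hL⟩
  calc volume K + volume L
      ≤ volume (insert a K) + volume (insert b L) := by gcongr <;> exact subset_insert _ _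
    _ ≤ volume (insert a K + insert b L) :=
        volume_add_le_volume_add_of_isCompact (hK.insert a) (hL.insert b)
          (insert_nonempty a K) (insert_nonempty b L)
    _ ≤ volume (A + B) :=
        measure_mono (add_subset_add (insert_subset ha hKA) (insert_subset hb hLB))

/-- The Prékopa–Leindler inequality for the measure `μ` with weights `α` and `β`. -/
def PrekopaLeindler (α β : ℝ) {E : Type*} [MeasurableSpace E] [AddCommGroup E] [Module ℝ E]
    (μ : Measure E) : Prop :=
  ∀ ⦃f g h : E → ℝ≥0∞⦄, Measurable f → Measurable g → Measurable h →
    (∀ x y, f x ^ α * g y ^ β ≤ h (α • x + β • y)) →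
    (∫⁻ x, f x ∂μ) ^ α * (∫⁻ x, g x ∂μ) ^ β ≤ ∫⁻ x, h x ∂μ

namespace PrekopaLeindler

section Real

variable {α β : ℝ} {f g h : ℝ → ℝ≥0∞}

theorem volume_superlevel_add_le (hα : 0 < α) (hβ : 0 < β) (hαβ : α + β = 1) (hf : Measurable f)
    (hg : Measurable g) (hle : ∀ x y, f x ^ α * g y ^ β ≤ h (α • x + β • y))
    (hsup : ⨆ x, f x = ⨆ x, g x) {t : ℝ≥0∞} (ht0 : t ≠ 0) (ht : t ≠ ∞) :
    ENNReal.ofReal α * volume {x | t < f x} + ENNReal.ofReal β * volume {x | t < g x} ≤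
      volume {x | t < h x} := by
  by_cases htop : t < ⨆ x, f x
  · have hscale {γ : ℝ} (hγ : 0 < γ) (A : Set ℝ) :
        ENNReal.ofReal γ * volume A = volume (γ • A) := by
      simp [Measure.addHaar_smul, abs_of_pos hγ]
    obtain ⟨x₀, hx₀⟩ := lt_iSup_iff.1 htop
    obtain ⟨y₀, hy₀⟩ := lt_iSup_iff.1 (hsup ▸ htop)
    rw [hscale hα, hscale hβ]
    refine (volume_add_le_volume_add ((measurableSet_lt measurable_const hf).const_smul₀ α)
      ((measurableSet_lt measurable_const hg).const_smul₀ β) ⟨_, smul_mem_smul_set hx₀⟩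
      ⟨_, smul_mem_smul_set hy₀⟩).trans (measure_mono ?_)
    rintro _ ⟨_, ⟨x, hx, rfl⟩, _, ⟨y, hy, rfl⟩, rfl⟩
    calc t = t ^ α * t ^ β := by rw [← ENNReal.rpow_add _ _ ht0 ht, hαβ, ENNReal.rpow_one]
      _ < f x ^ α * g y ^ β :=
        ENNReal.mul_lt_mul (ENNReal.rpow_lt_rpow hx hα) (ENNReal.rpow_lt_rpow hy hβ)
      _ ≤ h (α • x + β • y) := hle x y
  · have hempty {k : ℝ → ℝ≥0∞} (hk : ¬ t < ⨆ x, k x) : {x | t < k x} = ∅ :=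
      eq_empty_of_forall_notMem fun x hx => hk (hx.trans_le (le_iSup k x))
    simp [hempty htop, hempty (hsup ▸ htop)]

theorem lintegral_add_le_of_iSup_eq (hα : 0 < α) (hβ : 0 < β) (hαβ : α + β = 1)
    (hf : Measurable f) (hg : Measurable g) (hh : Measurable h)
    (hle : ∀ x y, f x ^ α * g y ^ β ≤ h (α • x + β • y)) (hsup : ⨆ x, f x = ⨆ x, g x) :
    ENNReal.ofReal α * (∫⁻ x, f x) + ENNReal.ofReal β * (∫⁻ x, g x) ≤ ∫⁻ x, h x := by
  have hanti (k : ℝ → ℝ≥0∞) : Measurable fun t : ℝ => volume {x | ENNReal.ofReal t < k x} :=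
    Antitone.measurable fun s t hst =>
      measure_mono fun x hx => (ENNReal.ofReal_le_ofReal hst).trans_lt hx
  rw [lintegral_eq_lintegral_superlevel hf, lintegral_eq_lintegral_superlevel hg,
    lintegral_eq_lintegral_superlevel hh, ← lintegral_const_mul _ (hanti f),
    ← lintegral_const_mul _ (hanti g), ← lintegral_add_left ((hanti f).const_mul _)]
  exact setLIntegral_mono' measurableSet_Ioi fun t ht => volume_superlevel_add_le hα hβ hαβ hf hg
    hle hsup (ENNReal.ofReal_pos.2 ht).ne' ENNReal.ofReal_ne_top

theorem real_of_iSup_ne_top (hα : 0 < α) (hβ : 0 < β) (hαβ : α + β = 1)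
    (hf : Measurable f) (hg : Measurable g) (hh : Measurable h)
    (hle : ∀ x y, f x ^ α * g y ^ β ≤ h (α • x + β • y))
    (hf_top : ⨆ x, f x ≠ ∞) (hg_top : ⨆ x, g x ≠ ∞) :
    (∫⁻ x, f x) ^ α * (∫⁻ x, g x) ^ β ≤ ∫⁻ x, h x := by
  rcases eq_or_ne (⨆ x, f x) 0 with hf0 | hf0
  · simp [ENNReal.iSup_eq_zero.1 hf0, hα]
  rcases eq_or_ne (⨆ x, g x) 0 with hg0 | hg0
  · simp [ENNReal.iSup_eq_zero.1 hg0, hβ]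
  set c : ℝ≥0∞ := (⨆ x, f x) / ⨆ x, g x
  have hc0 : c ^ β ≠ 0 := by
    simp [c, ENNReal.rpow_eq_zero_iff, ENNReal.div_eq_zero_iff, hf0, hg_top, hβ.not_gt]
  have hctop : c ^ β ≠ ∞ := ENNReal.rpow_ne_top_of_nonneg hβ.le (ENNReal.div_ne_top hf_top hg0)
  have hscaled : ENNReal.ofReal α * (∫⁻ x, f x) + ENNReal.ofReal β * (∫⁻ x, c * g x) ≤
      ∫⁻ x, c ^ β * h x := by
    refine lintegral_add_le_of_iSup_eq hα hβ hαβ hf (hg.const_mul c) (hh.const_mul _) ?_ ?_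
    · intro x y
      rw [ENNReal.mul_rpow_of_nonneg _ _ hβ.le, mul_left_comm]
      gcongr
      exact hle x y
    · rw [← ENNReal.mul_iSup, ENNReal.div_mul_cancel hg0 hg_top]
  rw [lintegral_const_mul _ hg, lintegral_const_mul _ hh] at hscaled
  have hmean := (ennreal_geom_mean_le_arith_mean2_weighted hα hβ hαβ _ _).trans hscaled
  rw [ENNReal.mul_rpow_of_nonneg _ _ hβ.le, mul_left_comm] at hmean
  exact (ENNReal.mul_le_mul_iff_right hc0 hctop).1 hmean

theorem real (hα : 0 < α) (hβ : 0 < β) (hαβ : α + β = 1) :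
    PrekopaLeindler α β (volume : Measure ℝ) := by
  intro f g h hf hg hh hle
  rcases eq_or_ne (∫⁻ x, f x) 0 with hf0 | hf0
  · simp [hf0, hα]
  rcases eq_or_ne (∫⁻ x, g x) 0 with hg0 | hg0
  · simp [hg0, hβ]
  have hlim : Tendsto (fun n : ℕ => (∫⁻ x, min (f x) n) ^ α * (∫⁻ x, min (g x) n) ^ β) atTop
      (𝓝 ((∫⁻ x, f x) ^ α * (∫⁻ x, g x) ^ β)) :=
    ENNReal.Tendsto.mul
      ((ENNReal.continuous_rpow_const.tendsto _).comp (tendsto_lintegral_min_natCast hf))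
      (by simp [hf0, hα.not_gt])
      ((ENNReal.continuous_rpow_const.tendsto _).comp (tendsto_lintegral_min_natCast hg))
      (by simp [hg0, hβ.not_gt])
  have htop (k : ℝ → ℝ≥0∞) (n : ℕ) : ⨆ x, min (k x) n ≠ ∞ :=
    ne_top_of_le_ne_top (ENNReal.natCast_ne_top n) (iSup_le fun x => min_le_right _ _)
  refine le_of_tendsto' hlim fun n => real_of_iSup_ne_top hα hβ hαβ (hf.min measurable_const)
    (hg.min measurable_const) hh (fun x y => le_trans ?_ (hle x y)) (htop f n) (htop g n)
  gcongr <;> exact min_le_left _ _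

end Real

section Constructions

variable {α β : ℝ} {E F : Type*} [MeasurableSpace E] [AddCommGroup E] [Module ℝ E]
  [MeasurableSpace F] [AddCommGroup F] [Module ℝ F] {μ : Measure E} {ν : Measure F}

theorem prod [SFinite μ] [SFinite ν] (hμ : PrekopaLeindler α β μ) (hν : PrekopaLeindler α β ν) :
    PrekopaLeindler α β (μ.prod ν) := by
  intro f g h hf hg hh hle
  rw [lintegral_prod _ hf.aemeasurable, lintegral_prod _ hg.aemeasurable,
    lintegral_prod _ hh.aemeasurable]
  refine hμ hf.lintegral_prod_right' hg.lintegral_prod_right' hh.lintegral_prod_right'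
    fun x y => hν (hf.comp measurable_prodMk_left) (hg.comp measurable_prodMk_left)
      (hh.comp measurable_prodMk_left) fun a b => hle (x, a) (y, b)

theorem map (hμ : PrekopaLeindler α β μ) (L : E →ₗ[ℝ] F) (hL : Measurable L) :
    PrekopaLeindler α β (μ.map L) := by
  intro f g h hf hg hh hle
  rw [lintegral_map hf hL, lintegral_map hg hL, lintegral_map hh hL]
  refine hμ (hf.comp hL) (hg.comp hL) (hh.comp hL) fun x y => ?_
  simpa only [Function.comp_apply, map_add, map_smul] using hle (L x) (L y)

theorem smul (hμ : PrekopaLeindler α β μ) (hα : 0 < α) (hβ : 0 < β) (hαβ : α + β = 1) (c : ℝ≥0) :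
    PrekopaLeindler α β (c • μ) := by
  intro f g h hf hg hh hle
  simp only [ENNReal.smul_def, lintegral_smul_measure, smul_eq_mul]
  calc (c * ∫⁻ x, f x ∂μ) ^ α * (c * ∫⁻ x, g x ∂μ) ^ β
      = c * ((∫⁻ x, f x ∂μ) ^ α * (∫⁻ x, g x ∂μ) ^ β) := by
        rw [ENNReal.mul_rpow_of_nonneg _ _ hα.le, ENNReal.mul_rpow_of_nonneg _ _ hβ.le,
          mul_mul_mul_comm, ← ENNReal.rpow_add_of_nonneg _ _ hα.le hβ.le, hαβ, ENNReal.rpow_one]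
    _ ≤ c * ∫⁻ x, h x ∂μ := by gcongr; exact hμ hf hg hh hle

theorem measure_rpow_mul_measure_rpow_le (hμ : PrekopaLeindler α β μ) (hα : 0 < α) (hβ : 0 < β)
    {A B S : Set E} (hA : MeasurableSet A) (hB : MeasurableSet B) (hS : MeasurableSet S)
    (hABS : ∀ x ∈ A, ∀ y ∈ B, α • x + β • y ∈ S) : μ A ^ α * μ B ^ β ≤ μ S := by
  have := hμ (measurable_one.indicator hA) (measurable_one.indicator hB)
    (measurable_one.indicator hS) fun x y => ?_
  · simpa only [lintegral_indicator_one, hA, hB, hS] using this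
  by_cases hx : x ∈ A
  · by_cases hy : y ∈ B
    · simp [hx, hy, hABS x hx y hy]
    · simp [hy, hβ]
  · simp [hx, hα]

end Constructions

variable {α β : ℝ}

theorem pi (hα : 0 < α) (hβ : 0 < β) (hαβ : α + β = 1) (n : ℕ) :
    PrekopaLeindler α β (volume : Measure (Fin n → ℝ)) := by
  induction n with
  | zero =>
    intro f g h _ _ _ hle
    rw [volume_pi, Measure.pi_of_empty (x := 0), lintegral_dirac, lintegral_dirac, lintegral_dirac]
    simpa using hle 0 0
  | succ n ih =>
    let e := Fin.consLinearEquiv ℝ fun _ : Fin (n + 1) => ℝ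
    have he : MeasurePreserving e := by
      convert (volume_preserving_piFinSuccAbove (fun _ : Fin (n + 1) => ℝ) 0).symm using 1
      ext x
      simp [e, MeasurableEquiv.piFinSuccAbove]
    rw [← he.map_eq]
    exact ((real hα hβ hαβ).prod ih).map e.toLinearMap he.measurable

theorem of_isAddHaarMeasure {E : Type*} [NormedAddCommGroup E] [NormedSpace ℝ E]
    [FiniteDimensional ℝ E] [MeasurableSpace E] [BorelSpace E] (μ : Measure E)
    [μ.IsAddHaarMeasure] (hα : 0 < α) (hβ : 0 < β) (hαβ : α + β = 1) :
    PrekopaLeindler α β μ := by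
  let e := (ContinuousLinearEquiv.ofFinrankEq (𝕜 := ℝ)
    (Module.finrank_fin_fun ℝ : Module.finrank ℝ (Fin (Module.finrank ℝ E) → ℝ) = _))
  let ν : Measure E := volume.map e
  have : ν.IsAddHaarMeasure := e.isAddHaarMeasure_map volume
  rw [Measure.isAddLeftInvariant_eq_smul μ ν]
  exact ((pi hα hβ hαβ _).map e.toLinearEquiv.toLinearMap e.continuous.measurable).smul hα hβ hαβ _

end PrekopaLeindler

section Haar

variable {E : Type*} [NormedAddCommGroup E] [NormedSpace ℝ E] [FiniteDimensional ℝ E]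
  [MeasurableSpace E] [BorelSpace E] (μ : Measure E) [μ.IsAddHaarMeasure]

theorem addHaar_ball_add_le_addHaar_thickening {A : Set E} (hA : MeasurableSet A)
    (hAn : A.Nonempty) {u ρ : ℝ} (hu : 0 ≤ u) (hρ : 0 < ρ)
    (hball : μ (Metric.ball 0 u) ≤ μ A) :
    μ (Metric.ball 0 (u + ρ)) ≤ μ (Metric.thickening ρ A) := by
  rcases hu.eq_or_lt with rfl | hu
  · obtain ⟨y, hy⟩ := hAn
    rw [zero_add, ← Measure.addHaar_ball_center μ y]
    exact measure_mono (Metric.ball_subset_thickening hy ρ)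
  set α := u / (u + ρ)
  set β := ρ / (u + ρ)
  have hα : 0 < α := by positivity
  have hβ : 0 < β := by positivity
  have hαβ : α + β = 1 := by simp only [α, β]; field_simp
  set W := μ (Metric.ball 0 (u + ρ))
  have hW0 : W ≠ 0 := (Metric.measure_ball_pos μ _ (by positivity)).ne'
  have hWtop : W ≠ ∞ := measure_ball_lt_top.ne
  have hW : W ≤ μ (α⁻¹ • A) := by
    have : Metric.ball (0 : E) (u + ρ) = α⁻¹ • Metric.ball (0 : E) u := by
      rw [smul_ball (by positivity), smul_zero, Real.norm_of_nonneg (by positivity), inv_div,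
        div_mul_cancel₀ _ hu.ne']
    simp only [W, this, Measure.addHaar_smul]
    gcongr
  have hBM : μ (α⁻¹ • A) ^ α * W ^ β ≤ μ (Metric.thickening ρ A) := by
    refine (PrekopaLeindler.of_isAddHaarMeasure μ hα hβ hαβ).measure_rpow_mul_measure_rpow_le hα hβ
      (hA.const_smul₀ _) measurableSet_ball Metric.isOpen_thickening.measurableSet
      fun x hx y hy => ?_
    refine Metric.mem_thickening_iff.2 ⟨α • x, (mem_inv_smul_set_iff₀ hα.ne' _ _).1 hx, ?_⟩
    rw [dist_self_add_left, norm_smul, Real.norm_of_nonneg hβ.le]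
    calc β * ‖y‖ < β * (u + ρ) := by gcongr; exact mem_ball_zero_iff.1 hy
      _ = ρ := div_mul_cancel₀ _ (by positivity)
  calc W = W ^ α * W ^ β := by rw [← ENNReal.rpow_add _ _ hW0 hWtop, hαβ, ENNReal.rpow_one]
    _ ≤ μ (α⁻¹ • A) ^ α * W ^ β := by gcongr
    _ ≤ μ (Metric.thickening ρ A) := hBM

theorem addHaar_ball_zero_lt_iff [Nontrivial E] {r R : ℝ} (hr : 0 ≤ r) :
    μ (Metric.ball 0 r) < μ (Metric.ball 0 R) ↔ r < R := by
  refine ⟨fun h => lt_of_not_ge fun hle => h.not_ge (measure_mono (Metric.ball_subset_ball hle)),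
    fun h => ?_⟩
  rw [Measure.addHaar_ball μ _ hr, Measure.addHaar_ball μ _ (hr.trans h.le)]
  refine (ENNReal.mul_lt_mul_iff_left (Metric.measure_ball_pos μ _ one_pos).ne'
    measure_ball_lt_top.ne).2 ?_
  exact (ENNReal.ofReal_lt_ofReal_iff (pow_pos (hr.trans_lt h) _)).2
    (pow_lt_pow_left₀ h hr Module.finrank_pos.ne')

theorem exists_addHaar_ball_zero_eq [Nontrivial E] {m : ℝ≥0∞} (hm : m ≠ ∞) :
    ∃ R : ℝ, 0 ≤ R ∧ μ (Metric.ball 0 R) = m := by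
  set B := μ (Metric.ball 0 1)
  have hB0 : B ≠ 0 := (Metric.measure_ball_pos μ _ one_pos).ne'
  have hBtop : B ≠ ∞ := measure_ball_lt_top.ne
  have hd : Module.finrank ℝ E ≠ 0 := Module.finrank_pos.ne'
  refine ⟨(m / B).toReal ^ (Module.finrank ℝ E : ℝ)⁻¹, by positivity, ?_⟩
  rw [Measure.addHaar_ball μ _ (by positivity), Real.rpow_inv_natCast_pow (by positivity) hd,
    ENNReal.ofReal_toReal (ENNReal.div_ne_top hm hB0), ENNReal.div_mul_cancel hB0 hBtop]

theorem addHaar_setOf_addHaar_ball_norm_lt [Nontrivial E] (m : ℝ≥0∞) :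
    μ {x | μ (Metric.ball 0 ‖x‖) < m} = m := by
  rcases eq_or_ne m ∞ with rfl | hm
  · have := NormedSpace.noncompactSpace ℝ E
    simp [measure_ball_lt_top, measure_univ_of_isAddLeftInvariant]
  · obtain ⟨R, -, rfl⟩ := exists_addHaar_ball_zero_eq μ hm
    congr 1
    ext x
    simp [addHaar_ball_zero_lt_iff]

end Haar

section SupConv

variable {E : Type*} [SeminormedAddCommGroup E] {c : ℝ≥0} {k : E → ℝ≥0∞} {x : E} {a : ℝ≥0∞}

/-- The quadratic sup-convolution `x ↦ sup_y (k y - c ‖x - y‖²)` of a nonnegative function, with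
truncated subtraction. As `c → ∞` its excess over `k` is `‖∇k‖² / (4c)` to first order. -/
noncomputable def supConv (c : ℝ≥0) (k : E → ℝ≥0∞) (x : E) : ℝ≥0∞ :=
  ⨆ y, k y - c * ‖x - y‖ₑ ^ 2

theorem lt_supConv_iff : a < supConv c k x ↔ ∃ y, a + c * ‖x - y‖ₑ ^ 2 < k y := by
  simp only [supConv, lt_iSup_iff, lt_tsub_iff_right]

theorem measurable_supConv [MeasurableSpace E] [OpensMeasurableSpace E] :
    Measurable (supConv c k) := by
  refine measurable_of_Ioi fun a => IsOpen.measurableSet ?_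
  have : supConv c k ⁻¹' Ioi a = ⋃ y, {x | a + c * ‖x - y‖ₑ ^ 2 < k y} := by
    ext x
    simp [lt_supConv_iff]
  rw [this]
  exact isOpen_iUnion fun y =>
    isOpen_lt (by fun_prop (disch := exact ENNReal.coe_ne_top)) continuous_const

end SupConv

section Rearrangement

variable {E : Type*} [NormedAddCommGroup E] [MeasurableSpace E]

/-- The symmetric decreasing rearrangement of `k` with respect to `μ`: the radially decreasing
function whose superlevel set `{b < k}` is a ball around `0` of the same measure. -/
noncomputable def symmRearr (μ : Measure E) (k : E → ℝ≥0∞) (x : E) : ℝ≥0∞ :=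
  sSup {a | μ (Metric.ball 0 ‖x‖) < μ {y | a < k y}}

variable {μ : Measure E} {k : E → ℝ≥0∞} {x : E} {b : ℝ≥0∞}

theorem lt_symmRearr_iff : b < symmRearr μ k x ↔ μ (Metric.ball 0 ‖x‖) < μ {y | b < k y} := by
  refine ⟨fun h => ?_, fun h => ?_⟩
  · obtain ⟨a, ha, hba⟩ := lt_sSup_iff.1 h
    exact ha.trans_le (measure_mono fun y hy => hba.trans hy)
  · have hb : b < ∞ := lt_top_iff_ne_top.2 <| by rintro rfl; simp at h
    obtain ⟨u, hu_anti, hu_mem, hu_lim⟩ := exists_seq_strictAnti_tendsto' hb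
    have hlevel : {y | b < k y} = ⋃ n, {y | u n < k y} := by
      ext y
      simp only [mem_ofPred_eq, mem_iUnion]
      exact ⟨fun hy => ((tendsto_order.1 hu_lim).2 _ hy).exists,
        fun ⟨n, hn⟩ => (hu_mem n).1.trans hn⟩
    have hmono : Monotone fun n => {y | u n < k y} :=
      fun m n hmn y hy => (hu_anti.antitone hmn).trans_lt hy
    rw [hlevel, hmono.measure_iUnion] at h
    obtain ⟨n, hn⟩ := lt_iSup_iff.1 h
    exact (hu_mem n).1.trans_le (le_sSup hn)

theorem symmRearr_le {M : ℝ≥0∞} (hk : ∀ y, k y ≤ M) : symmRearr μ k x ≤ M := by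
  refine le_of_not_gt fun h => ?_
  simp [lt_symmRearr_iff, (hk _).not_gt] at h

theorem exists_symmRearr_enorm_le {g : E → ℝ} (hg : Continuous g) (hgc : HasCompactSupport g) :
    ∃ M : ℝ≥0, ∀ x, symmRearr μ (fun y => ‖g y‖ₑ) x ≤ M := by
  obtain ⟨M, hM⟩ := hgc.exists_bound_of_continuous hg
  exact ⟨M.toNNReal, fun x => symmRearr_le fun y =>
    (ofReal_norm (g y)).symm.trans_le (ENNReal.ofReal_le_ofReal (hM y))⟩

theorem support_symmRearr_subset {R : ℝ}
    (hR : μ (Function.support k) ≤ μ (Metric.ball 0 R)) :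
    Function.support (symmRearr μ k) ⊆ Metric.ball 0 R := by
  intro x hx
  have hlt : μ (Metric.ball 0 ‖x‖) < μ (Metric.ball 0 R) :=
    (lt_symmRearr_iff.1 (pos_iff_ne_zero.2 hx)).trans_le
      (by simpa only [pos_iff_ne_zero, Function.support] using hR)
  refine mem_ball_zero_iff.2 (lt_of_not_ge fun hle => hlt.not_ge ?_)
  exact measure_mono (Metric.ball_subset_ball hle)

theorem measurable_symmRearr [OpensMeasurableSpace E] : Measurable (symmRearr μ k) := by
  refine measurable_of_Ioi fun b => ?_
  simp only [preimage, mem_Ioi, lt_symmRearr_iff]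
  have hmono : Monotone fun r : ℝ => μ (Metric.ball 0 r) := fun r R h =>
    measure_mono (Metric.ball_subset_ball h)
  exact measurableSet_lt (hmono.measurable.comp measurable_norm) measurable_const

variable [NormedSpace ℝ E] [FiniteDimensional ℝ E] [BorelSpace E] [Nontrivial E]
  [μ.IsAddHaarMeasure]

theorem measure_superlevel_symmRearr (b : ℝ≥0∞) :
    μ {x | b < symmRearr μ k x} = μ {x | b < k x} := by
  simp only [lt_symmRearr_iff, addHaar_setOf_addHaar_ball_norm_lt]

theorem lintegral_symmRearr_pow (hk : Measurable k) {n : ℕ} (hn : n ≠ 0) :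
    ∫⁻ x, symmRearr μ k x ^ n ∂μ = ∫⁻ x, k x ^ n ∂μ := by
  have hlevel (t : ℝ) (f : E → ℝ≥0∞) :
      {x | ENNReal.ofReal t < f x ^ n} = {x | ENNReal.ofReal t ^ (n⁻¹ : ℝ) < f x} := by
    ext x
    rw [mem_ofPred_eq, mem_ofPred_eq, ENNReal.rpow_inv_lt_iff (by positivity),
      ENNReal.rpow_natCast]
  rw [lintegral_eq_lintegral_superlevel (measurable_symmRearr.pow_const n),
    lintegral_eq_lintegral_superlevel (hk.pow_const n)]
  simp only [hlevel, measure_superlevel_symmRearr]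

theorem supConv_symmRearr_le {c : ℝ≥0} (hk : Measurable k) :
    supConv c (symmRearr μ k) x ≤ symmRearr μ (supConv c k) x := by
  refine le_of_forall_lt fun a ha => ?_
  obtain ⟨y, hy⟩ := lt_supConv_iff.1 ha
  obtain ⟨ρ, hρ, hxy⟩ : ∃ ρ : ℝ, a + c * ENNReal.ofReal ρ ^ 2 < symmRearr μ k y ∧ ‖x - y‖ < ρ := by
    have hcont : Continuous fun ρ : ℝ => a + c * ENNReal.ofReal ρ ^ 2 := by
      have := ENNReal.continuous_ofReal
      fun_prop (disch := exact ENNReal.coe_ne_top)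
    have hev : ∀ᶠ ρ in 𝓝[>] ‖x - y‖, a + c * ENNReal.ofReal ρ ^ 2 < symmRearr μ k y :=
      nhdsWithin_le_nhds <| hcont.continuousAt.eventually_lt_const (by simpa using hy)
    exact (hev.and self_mem_nhdsWithin).exists
  set A := {z | a + c * ENNReal.ofReal ρ ^ 2 < k z}
  have hball : μ (Metric.ball 0 ‖y‖) < μ A := lt_symmRearr_iff.1 hρ
  have hA : A.Nonempty := nonempty_of_measure_ne_zero (bot_le.trans_lt hball).ne'
  have hthick : Metric.thickening ρ A ⊆ {z | a < supConv c k z} := by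
    intro z hz
    obtain ⟨w, hw, hzw⟩ := Metric.mem_thickening_iff.1 hz
    refine lt_supConv_iff.2 ⟨w, lt_of_le_of_lt ?_ hw⟩
    gcongr
    rw [← ofReal_norm, ← dist_eq_norm]
    exact ENNReal.ofReal_le_ofReal hzw.le
  rw [lt_symmRearr_iff]
  calc μ (Metric.ball 0 ‖x‖)
      < μ (Metric.ball 0 (‖y‖ + ρ)) := by
        rw [addHaar_ball_zero_lt_iff μ (norm_nonneg x)]
        linarith [norm_le_norm_add_norm_sub' x y]
    _ ≤ μ (Metric.thickening ρ A) := addHaar_ball_add_le_addHaar_thickening μ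
        (measurableSet_lt measurable_const hk) hA (norm_nonneg y)
        ((norm_nonneg _).trans_lt hxy) hball.le
    _ ≤ μ {z | a < supConv c k z} := measure_mono hthick

end Rearrangement

section Mollify

theorem exists_contDiffBump_seq {E : Type*} [NormedAddCommGroup E] {ε : ℝ} (hε : 0 < ε) :
    ∃ φ : ℕ → ContDiffBump (0 : E), Tendsto (fun n => (φ n).rOut) atTop (𝓝 0) ∧
      ∀ n, (φ n).rOut < ε ∧ (φ n).rOut = 2 * (φ n).rIn := by
  refine ⟨fun n => ⟨ε / (n + 2) / 2, ε / (n + 2), by positivity, half_lt_self (by positivity)⟩,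
    tendsto_const_nhds.div_atTop (tendsto_atTop_add_const_right _ 2 tendsto_natCast_atTop_atTop),
    fun n => ⟨div_lt_self hε ?_, (mul_div_cancel₀ _ two_ne_zero).symm⟩⟩
  linarith [n.cast_nonneg (α := ℝ)]

theorem locallyIntegrable_toReal_of_le {X : Type*} [TopologicalSpace X]
    [MeasurableSpace X] {μ : Measure X} [IsLocallyFiniteMeasure μ] {h : X → ℝ≥0∞} {M : ℝ≥0}
    (hh : Measurable h) (hM : ∀ x, h x ≤ M) :
    LocallyIntegrable (fun x => (h x).toReal) μ := by
  refine (locallyIntegrable_const (M : ℝ)).mono hh.ennreal_toReal.aestronglyMeasurable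
    (Eventually.of_forall fun x => ?_)
  simpa using ENNReal.toReal_mono ENNReal.coe_ne_top (hM x)

variable {E : Type*} [NormedAddCommGroup E] [MeasurableSpace E]

theorem lintegral_lintegral_mul_sub [MeasurableSub₂ E] [MeasurableAdd E] {μ : Measure E} [SFinite μ]
    [μ.IsAddRightInvariant] {f g : E → ℝ≥0∞} (hf : Measurable f) (hg : Measurable g) :
    ∫⁻ x, ∫⁻ z, f z * g (x - z) ∂μ ∂μ = (∫⁻ z, f z ∂μ) * ∫⁻ x, g x ∂μ := by
  rw [lintegral_lintegral_swap (by fun_prop), ← lintegral_mul_const _ hf]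
  refine lintegral_congr fun z => ?_
  rw [lintegral_const_mul _ (by fun_prop), lintegral_sub_right_eq_self g z]

variable [NormedSpace ℝ E] [HasContDiffBump E]

/-- The mollification of `h` by the normalised bump function `φ`; points where `h = ∞` contribute
`0`. -/
noncomputable def mollify (μ : Measure E) (φ : ContDiffBump (0 : E)) (h : E → ℝ≥0∞) : E → ℝ :=
  φ.normed μ ⋆[ContinuousLinearMap.lsmul ℝ ℝ, μ] fun x => (h x).toReal

variable {μ : Measure E} {φ : ContDiffBump (0 : E)} {h : E → ℝ≥0∞} {M : ℝ≥0}

theorem mollify_nonneg (x : E) : 0 ≤ mollify μ φ h x :=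
  integral_nonneg fun z => mul_nonneg (φ.nonneg_normed z) ENNReal.toReal_nonneg

variable [FiniteDimensional ℝ E] [BorelSpace E] [μ.IsAddHaarMeasure]

theorem support_mollify_subset {R : ℝ} (hR : Function.support h ⊆ Metric.ball 0 R) :
    Function.support (mollify μ φ h) ⊆ Metric.ball 0 (R + φ.rOut) := by
  refine (support_convolution_subset _).trans ?_
  rintro _ ⟨z, hz, x, hx, rfl⟩
  have hzr : ‖z‖ < φ.rOut := by rwa [φ.support_normed_eq, mem_ball_zero_iff] at hz
  have hxR : ‖x‖ < R := mem_ball_zero_iff.1 (hR fun hx0 => hx (by simp [hx0]))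
  rw [add_comm R]
  exact mem_ball_zero_iff.2 ((norm_add_le z x).trans_lt (add_lt_add hzr hxR))

theorem contDiff_mollify (hh : Measurable h) (hM : ∀ x, h x ≤ M) {n : ℕ∞} :
    ContDiff ℝ n (mollify μ φ h) :=
  φ.hasCompactSupport_normed.contDiff_convolution_left _ φ.contDiff_normed
    (locallyIntegrable_toReal_of_le hh hM)

theorem tsupport_mollify_subset {R : ℝ} (hR : Function.support h ⊆ Metric.ball 0 R) :
    tsupport (mollify μ φ h) ⊆ Metric.closedBall 0 (R + φ.rOut) :=
  closure_minimal ((support_mollify_subset hR).trans Metric.ball_subset_closedBall)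
    Metric.isClosed_closedBall

theorem hasCompactSupport_mollify {R : ℝ} (hR : Function.support h ⊆ Metric.ball 0 R) :
    HasCompactSupport (mollify μ φ h) :=
  (isCompact_closedBall 0 (R + φ.rOut)).of_isClosed_subset (isClosed_tsupport _)
    (tsupport_mollify_subset hR)

theorem ofReal_mollify (hh : Measurable h) (hM : ∀ x, h x ≤ M) (x : E) :
    ENNReal.ofReal (mollify μ φ h x) = ∫⁻ z, ENNReal.ofReal (φ.normed μ z) * h (x - z) ∂μ := by
  have hint : Integrable (fun z => φ.normed μ z * (h (x - z)).toReal) μ :=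
    φ.integrable_normed.mul_bdd (c := (M : ℝ))
      (hh.comp (measurable_const.sub measurable_id)).ennreal_toReal.aestronglyMeasurable
      (Eventually.of_forall fun z => by
        simpa using ENNReal.toReal_mono ENNReal.coe_ne_top (hM (x - z)))
  refine (ofReal_integral_eq_lintegral_ofReal hint (Eventually.of_forall fun z =>
    mul_nonneg (φ.nonneg_normed z) ENNReal.toReal_nonneg)).trans (lintegral_congr fun z => ?_)
  rw [ENNReal.ofReal_mul (φ.nonneg_normed z),
    ENNReal.ofReal_toReal (ne_top_of_le_ne_top ENNReal.coe_ne_top (hM _))]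

theorem lintegral_ofReal_normed : ∫⁻ z, ENNReal.ofReal (φ.normed μ z) ∂μ = 1 := by
  rw [← ofReal_integral_eq_lintegral_ofReal φ.integrable_normed
    (Eventually.of_forall φ.nonneg_normed), φ.integral_normed, ENNReal.ofReal_one]

theorem lintegral_lintegral_normed_mul (hh : Measurable h) :
    ∫⁻ x, ∫⁻ z, ENNReal.ofReal (φ.normed μ z) * h (x - z) ∂μ ∂μ = ∫⁻ x, h x ∂μ := by
  rw [lintegral_lintegral_mul_sub φ.continuous_normed.measurable.ennreal_ofReal hh,
    lintegral_ofReal_normed, one_mul]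

theorem lintegral_mollify (hh : Measurable h) (hM : ∀ x, h x ≤ M) :
    ∫⁻ x, ENNReal.ofReal (mollify μ φ h x) ∂μ = ∫⁻ x, h x ∂μ := by
  simp only [ofReal_mollify hh hM, lintegral_lintegral_normed_mul hh]

theorem supConv_mollify_le (hh : Measurable h) (hM : ∀ x, h x ≤ M) (c : ℝ≥0) (x : E) :
    supConv c (fun y => ENNReal.ofReal (mollify μ φ h y)) x ≤
      ∫⁻ z, ENNReal.ofReal (φ.normed μ z) * supConv c h (x - z) ∂μ := by
  set w : E → ℝ≥0∞ := fun z => ENNReal.ofReal (φ.normed μ z)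
  have hw : Measurable w := φ.continuous_normed.measurable.ennreal_ofReal
  refine iSup_le fun y => ?_
  calc ENNReal.ofReal (mollify μ φ h y) - c * ‖x - y‖ₑ ^ 2
      = ∫⁻ z, w z * h (y - z) ∂μ - ∫⁻ z, w z * (c * ‖x - y‖ₑ ^ 2) ∂μ := by
        rw [ofReal_mollify hh hM, lintegral_mul_const _ hw, lintegral_ofReal_normed, one_mul]
    _ ≤ ∫⁻ z, w z * h (y - z) - w z * (c * ‖x - y‖ₑ ^ 2) ∂μ :=
        lintegral_sub_le _ _ (by fun_prop)
    _ ≤ ∫⁻ z, w z * supConv c h (x - z) ∂μ := by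
        refine lintegral_mono fun z => ?_
        rw [← ENNReal.mul_sub fun _ _ => ENNReal.ofReal_ne_top]
        gcongr
        rw [← sub_sub_sub_cancel_right x y z]
        exact le_iSup (fun y => h y - c * ‖x - z - y‖ₑ ^ 2) (y - z)

theorem lintegral_supConv_mollify_le (hh : Measurable h) (hM : ∀ x, h x ≤ M) (c : ℝ≥0) :
    ∫⁻ x, supConv c (fun y => ENNReal.ofReal (mollify μ φ h y)) x ∂μ ≤
      ∫⁻ x, supConv c h x ∂μ :=
  (lintegral_mono (supConv_mollify_le hh hM c)).trans_eq
    (lintegral_lintegral_normed_mul measurable_supConv)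

theorem lintegral_sq_le_liminf_lintegral_mollify_sq (hh : Measurable h) (hM : ∀ x, h x ≤ M)
    {φ : ℕ → ContDiffBump (0 : E)} {K : ℝ}
    (hφ : Tendsto (fun n => (φ n).rOut) atTop (𝓝 0)) (hφK : ∀ n, (φ n).rOut ≤ K * (φ n).rIn) :
    ∫⁻ x, h x ^ 2 ∂μ ≤
      liminf (fun n => ∫⁻ x, ENNReal.ofReal (mollify μ (φ n) h x) ^ 2 ∂μ) atTop := by
  have hfin (x : E) : h x ≠ ∞ := ne_top_of_le_ne_top ENNReal.coe_ne_top (hM x)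
  have hlim := ContDiffBump.ae_convolution_tendsto_right_of_locallyIntegrable hφ
    (Eventually.of_forall hφK) (locallyIntegrable_toReal_of_le (μ := μ) hh hM)
  calc ∫⁻ x, h x ^ 2 ∂μ
      = ∫⁻ x, liminf (fun n => ENNReal.ofReal (mollify μ (φ n) h x) ^ 2) atTop ∂μ := by
        refine lintegral_congr_ae ?_
        filter_upwards [hlim] with x hx
        have := ((ENNReal.continuous_pow 2).tendsto _).comp (ENNReal.tendsto_ofReal hx)
        rw [ENNReal.ofReal_toReal (hfin x)] at this
        exact this.liminf_eq.symm
    _ ≤ liminf (fun n => ∫⁻ x, ENNReal.ofReal (mollify μ (φ n) h x) ^ 2 ∂μ) atTop :=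
        lintegral_liminf_le fun n =>
          (contDiff_mollify hh hM (n := 0)).continuous.measurable.ennreal_ofReal.pow_const 2

theorem exists_lt_lintegral_mollify_sq (hh : Measurable h) (hM : ∀ x, h x ≤ M) {a : ℝ≥0∞}
    (ha : a < ∫⁻ x, h x ^ 2 ∂μ) {ε : ℝ} (hε : 0 < ε) :
    ∃ φ : ContDiffBump (0 : E), φ.rOut < ε ∧
      a < ∫⁻ x, ENNReal.ofReal (mollify μ φ h x) ^ 2 ∂μ := by
  obtain ⟨φ, hφ, hφε⟩ := exists_contDiffBump_seq (E := E) hε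
  obtain ⟨n, hn⟩ := (eventually_lt_of_lt_liminf (ha.trans_le
    (lintegral_sq_le_liminf_lintegral_mollify_sq hh hM hφ fun n => (hφε n).2.le))).exists
  exact ⟨φ n, (hφε n).1, hn⟩

end Mollify

section Taylor

variable {E F : Type*} [NormedAddCommGroup E] [NormedSpace ℝ E] [NormedAddCommGroup F]
  [NormedSpace ℝ F] {g : E → F} {K c : ℝ≥0} {x : E}

theorem exists_norm_taylor_remainder_le (hg : ContDiff ℝ 2 g) (hgc : HasCompactSupport g) :
    ∃ K : ℝ≥0, ∀ x y, ‖g y - g x - fderiv ℝ g x (y - x)‖ ≤ K * ‖y - x‖ ^ 2 := by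
  have hfderiv : ContDiff ℝ 1 (fderiv ℝ g) := hg.fderiv_right (by norm_num)
  obtain ⟨K, hK⟩ := hfderiv.lipschitzWith_of_hasCompactSupport (hgc.fderiv ℝ) one_ne_zero
  refine ⟨K, fun x y => ?_⟩
  rw [sq, ← mul_assoc]
  refine (convex_closedBall x ‖y - x‖).norm_image_sub_le_of_norm_hasFDerivWithin_le'
    (f := g) (f' := fderiv ℝ g) (fun z _ => ?_) (fun z hz => ?_)
    (Metric.mem_closedBall_self (norm_nonneg _)) (mem_closedBall_iff_norm.2 le_rfl)
  · exact (hg.differentiable two_ne_zero z).hasFDerivAt.hasFDerivWithinAt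
  · calc ‖fderiv ℝ g z - fderiv ℝ g x‖ ≤ K * ‖z - x‖ := by
          simpa only [dist_eq_norm] using hK.dist_le_mul z x
      _ ≤ K * ‖y - x‖ := by gcongr; exact mem_closedBall_iff_norm.1 hz

theorem supConv_enorm_le (hKc : K < c)
    (hK : ∀ y, ‖g y - g x - fderiv ℝ g x (y - x)‖ ≤ K * ‖y - x‖ ^ 2) :
    supConv c (fun y => ‖g y‖ₑ) x ≤
      ENNReal.ofReal (‖g x‖ + ‖fderiv ℝ g x‖ ^ 2 / (4 * (c - K))) := by
  have hcK : (0 : ℝ) < c - K := sub_pos.2 hKc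
  refine iSup_le fun y => ?_
  set r := ‖y - x‖
  set n := ‖fderiv ℝ g x‖
  have hgrowth : ‖g y‖ ≤ ‖g x‖ + n * r + K * r ^ 2 := by
    calc ‖g y‖ = ‖g x + fderiv ℝ g x (y - x) + (g y - g x - fderiv ℝ g x (y - x))‖ := by
          congr 1; abel
      _ ≤ ‖g x‖ + ‖fderiv ℝ g x (y - x)‖ + ‖g y - g x - fderiv ℝ g x (y - x)‖ := norm_add₃_le
      _ ≤ ‖g x‖ + n * r + K * r ^ 2 := by
          gcongr
          exacts [(fderiv ℝ g x).le_opNorm _, hK y]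
  have hquad : n * r - (c - K) * r ^ 2 ≤ n ^ 2 / (4 * (c - K)) := by
    rw [le_div_iff₀ (by positivity)]
    nlinarith [sq_nonneg (n - 2 * (c - K) * r)]
  simp only [← ofReal_norm]
  rw [norm_sub_rev x y, ← ENNReal.ofReal_pow (norm_nonneg _),
    ← ENNReal.ofReal_coe_nnreal, ← ENNReal.ofReal_mul c.coe_nonneg,
    ← ENNReal.ofReal_sub _ (by positivity)]
  exact ENNReal.ofReal_le_ofReal (by linarith)

variable [MeasurableSpace E] [OpensMeasurableSpace E] {μ : Measure E} [IsFiniteMeasureOnCompacts μ]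

theorem integrable_norm_fderiv_sq (hg : ContDiff ℝ 1 g) (hgc : HasCompactSupport g) :
    Integrable (fun x => ‖fderiv ℝ g x‖ ^ 2) μ := by
  have hcont : Continuous fun x => ‖fderiv ℝ g x‖ ^ 2 := by fun_prop
  exact hcont.integrable_of_hasCompactSupport
    ((hgc.fderiv ℝ).comp_left (g := fun L => ‖L‖ ^ 2) (by simp))

theorem exists_lintegral_supConv_enorm_le (hg : ContDiff ℝ 2 g) (hgc : HasCompactSupport g) :
    ∃ K : ℝ≥0, ∀ c > K, ∫⁻ x, supConv c (fun y => ‖g y‖ₑ) x ∂μ ≤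
      ENNReal.ofReal (∫ x, ‖g x‖ ∂μ + (∫ x, ‖fderiv ℝ g x‖ ^ 2 ∂μ) / (4 * (c - K))) := by
  obtain ⟨K, hK⟩ := exists_norm_taylor_remainder_le hg hgc
  refine ⟨K, fun c hc => (lintegral_mono fun x => supConv_enorm_le hc (hK x)).trans_eq ?_⟩
  have hcK : (0 : ℝ) < c - K := sub_pos.2 hc
  have hgi : Integrable (fun x => ‖g x‖) μ :=
    (hg.continuous.integrable_of_hasCompactSupport hgc).norm
  have hDi : Integrable (fun x => ‖fderiv ℝ g x‖ ^ 2 / (4 * (c - K))) μ :=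
    (integrable_norm_fderiv_sq (hg.of_le one_le_two) hgc).div_const _
  rw [← integral_div, ← integral_add hgi hDi]
  exact (ofReal_integral_eq_lintegral_ofReal (f := fun x => ‖g x‖ + _) (hgi.add hDi)
    (Eventually.of_forall fun x => by positivity)).symm

end Taylor

section NormGradient

variable {E : Type*} [NormedAddCommGroup E] [InnerProductSpace ℝ E] [CompleteSpace E]

theorem norm_gradient (g : E → ℝ) (x : E) : ‖gradient g x‖ = ‖fderiv ℝ g x‖ :=
  LinearIsometryEquiv.norm_map _ _

theorem fderiv_gradient_self (g : E → ℝ) (x : E) :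
    fderiv ℝ g x (gradient g x) = ‖fderiv ℝ g x‖ ^ 2 := by
  rw [← norm_gradient, ← real_inner_self_eq_norm_sq]
  exact (InnerProductSpace.toDual_symm_apply (𝕜 := ℝ)).symm

-- The supremum is tested at `y = x + (2c)⁻¹ ∇g(x)`.
theorem le_supConv_ofReal {g : E → ℝ} {K c : ℝ≥0} {x : E} (hc : 0 < c)
    (hK : ∀ y, ‖g y - g x - fderiv ℝ g x (y - x)‖ ≤ K * ‖y - x‖ ^ 2) :
    ENNReal.ofReal (g x + (1 - K / c) / (4 * c) * ‖fderiv ℝ g x‖ ^ 2) ≤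
      supConv c (fun y => ENNReal.ofReal (g y)) x := by
  set v := (2 * c : ℝ)⁻¹ • gradient g x
  set n := ‖fderiv ℝ g x‖
  have hv : ‖v‖ = (2 * c : ℝ)⁻¹ * n := by
    rw [norm_smul, Real.norm_of_nonneg (by positivity), norm_gradient]
  have hDv : fderiv ℝ g x v = (2 * c : ℝ)⁻¹ * n ^ 2 := by
    rw [map_smul, fderiv_gradient_self, smul_eq_mul]
  have hremainder := hK (x + v)
  rw [add_sub_cancel_left, hv, hDv, Real.norm_eq_abs] at hremainder
  have hgain : (1 - K / c) / (4 * c) * n ^ 2 = (2 * c : ℝ)⁻¹ * n ^ 2 -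
      K * ((2 * c : ℝ)⁻¹ * n) ^ 2 - c * ((2 * c : ℝ)⁻¹ * n) ^ 2 := by
    field_simp
    ring
  refine le_trans ?_ (le_iSup (fun y => ENNReal.ofReal (g y) - c * ‖x - y‖ₑ ^ 2) (x + v))
  rw [← ofReal_norm, sub_add_cancel_left, norm_neg, hv, ← ENNReal.ofReal_pow (by positivity),
    ← ENNReal.ofReal_coe_nnreal, ← ENNReal.ofReal_mul c.coe_nonneg,
    ← ENNReal.ofReal_sub _ (by positivity)]
  exact ENNReal.ofReal_le_ofReal (by linarith [(abs_le.1 hremainder).1])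

end NormGradient

section PolyaSzego

variable {E : Type*} [NormedAddCommGroup E] [InnerProductSpace ℝ E] [FiniteDimensional ℝ E]
  [MeasurableSpace E] [BorelSpace E] {μ : Measure E}

theorem exists_le_lintegral_supConv_ofReal [IsFiniteMeasureOnCompacts μ] {ψ : E → ℝ}
    (hψ : ContDiff ℝ 2 ψ) (hψc : HasCompactSupport ψ) (hψ0 : ∀ x, 0 ≤ ψ x) :
    ∃ K : ℝ≥0, ∀ c > K,
      ENNReal.ofReal (∫ x, ψ x ∂μ + (1 - K / c) / (4 * c) * ∫ x, ‖fderiv ℝ ψ x‖ ^ 2 ∂μ) ≤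
        ∫⁻ x, supConv c (fun y => ENNReal.ofReal (ψ y)) x ∂μ := by
  obtain ⟨K, hK⟩ := exists_norm_taylor_remainder_le hψ hψc
  refine ⟨K, fun c hc => le_of_eq_of_le ?_
    (lintegral_mono fun x => le_supConv_ofReal (bot_le.trans_lt hc) (hK x))⟩
  have hKc : (0 : ℝ) ≤ 1 - K / c := sub_nonneg.2 (div_le_one_of_le₀ (by exact_mod_cast hc.le) c.2)
  have hψi : Integrable ψ μ := hψ.continuous.integrable_of_hasCompactSupport hψc
  have hDi : Integrable (fun x => (1 - K / c) / (4 * c) * ‖fderiv ℝ ψ x‖ ^ 2) μ :=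
    (integrable_norm_fderiv_sq (hψ.of_le one_le_two) hψc).const_mul _
  rw [← integral_const_mul, ← integral_add hψi hDi]
  exact ofReal_integral_eq_lintegral_ofReal (f := fun x => ψ x + _) (hψi.add hDi)
    (Eventually.of_forall fun x => add_nonneg (hψ0 x) (by positivity))

theorem integral_norm_fderiv_sq_le_of_supConv_le [IsFiniteMeasureOnCompacts μ] {g ψ : E → ℝ}
    (hg : ContDiff ℝ 2 g) (hgc : HasCompactSupport g) (hψ : ContDiff ℝ 2 ψ)
    (hψc : HasCompactSupport ψ) (hψ0 : ∀ x, 0 ≤ ψ x) (hint : ∫ x, ‖g x‖ ∂μ ≤ ∫ x, ψ x ∂μ)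
    (hsup : ∀ c, ∫⁻ x, supConv c (fun y => ENNReal.ofReal (ψ y)) x ∂μ ≤
      ∫⁻ x, supConv c (fun y => ‖g y‖ₑ) x ∂μ) :
    ∫ x, ‖fderiv ℝ ψ x‖ ^ 2 ∂μ ≤ ∫ x, ‖fderiv ℝ g x‖ ^ 2 ∂μ := by
  obtain ⟨K, hK⟩ := exists_lintegral_supConv_enorm_le (μ := μ) hg hgc
  obtain ⟨L, hL⟩ := exists_le_lintegral_supConv_ofReal (μ := μ) hψ hψc hψ0
  set D := ∫ x, ‖fderiv ℝ g x‖ ^ 2 ∂μ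
  set D' := ∫ x, ‖fderiv ℝ ψ x‖ ^ 2 ∂μ
  have hD : 0 ≤ D := integral_nonneg fun x => by positivity
  have hbound {c : ℝ≥0} (hKc : K < c) (hLc : L < c) :
      (1 - L / c) * D' ≤ (1 - K / c : ℝ)⁻¹ * D := by
    have hc : (0 : ℝ) < c := bot_le.trans_lt hKc
    have hcK : (0 : ℝ) < c - K := sub_pos.2 hKc
    have hle := (ENNReal.ofReal_le_ofReal_iff (add_nonneg (integral_nonneg fun x => norm_nonneg _)
      (div_nonneg hD (by positivity)))).1 ((hL c hLc).trans ((hsup c).trans (hK c hKc)))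
    have hdiff : (1 - L / c) / (4 * c) * D' ≤ D / (4 * (c - K)) := by linarith
    calc (1 - L / c) * D' = 4 * c * ((1 - L / c) / (4 * c) * D') := by field_simp
      _ ≤ 4 * c * (D / (4 * (c - K))) := by gcongr
      _ = (1 - K / c : ℝ)⁻¹ * D := by
        rw [show (1 - K / c : ℝ) = (c - K) / c by field_simp]
        field_simp
  have hlim (K : ℝ≥0) : Tendsto (fun c : ℝ≥0 => (1 - K / c : ℝ)) atTop (𝓝 1) := by
    simpa using (NNReal.tendsto_coe_atTop.2 tendsto_id).const_div_atTop (K : ℝ) |>.const_sub 1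
  refine le_of_tendsto_of_tendsto (f := fun c : ℝ≥0 => (1 - L / c : ℝ) * D')
    (by simpa using (hlim L).mul_const D')
    (by simpa using ((hlim K).inv₀ one_ne_zero).mul_const D) ?_
  filter_upwards [eventually_gt_atTop K, eventually_gt_atTop L] with c using hbound

theorem integral_norm_fderiv_mollify_symmRearr_sq_le [Nontrivial E] [μ.IsAddHaarMeasure]
    {g : E → ℝ} (hg : ContDiff ℝ 2 g) (hgc : HasCompactSupport g) (φ : ContDiffBump (0 : E)) :
    ∫ x, ‖fderiv ℝ (mollify μ φ (symmRearr μ fun y => ‖g y‖ₑ)) x‖ ^ 2 ∂μ ≤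
      ∫ x, ‖fderiv ℝ g x‖ ^ 2 ∂μ := by
  set k : E → ℝ≥0∞ := fun y => ‖g y‖ₑ
  have hk : Measurable k := hg.continuous.enorm.measurable
  obtain ⟨M, hM⟩ := exists_symmRearr_enorm_le (μ := μ) hg.continuous hgc
  have hmeas : Measurable (symmRearr μ k) := measurable_symmRearr
  obtain ⟨R, -, hR⟩ := exists_addHaar_ball_zero_eq μ (m := μ (Function.support k))
    ((measure_mono (by simpa [k] using subset_tsupport g)).trans_lt hgc.measure_lt_top).ne
  have hψ : ContDiff ℝ 2 (mollify μ φ (symmRearr μ k)) := contDiff_mollify hmeas hM (n := 2)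
  have hψc : HasCompactSupport (mollify μ φ (symmRearr μ k)) :=
    hasCompactSupport_mollify (support_symmRearr_subset hR.ge)
  refine integral_norm_fderiv_sq_le_of_supConv_le hg hgc hψ hψc mollify_nonneg (le_of_eq ?_)
    fun c => ?_
  · rw [integral_norm_eq_lintegral_enorm hg.continuous.aestronglyMeasurable,
      integral_eq_lintegral_of_nonneg_ae (Eventually.of_forall mollify_nonneg)
        hψ.continuous.aestronglyMeasurable, lintegral_mollify hmeas hM]
    simpa [k] using congrArg ENNReal.toReal (lintegral_symmRearr_pow hk one_ne_zero).symm
  · calc ∫⁻ x, supConv c (fun y => ENNReal.ofReal (mollify μ φ (symmRearr μ k) y)) x ∂μ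
        ≤ ∫⁻ x, supConv c (symmRearr μ k) x ∂μ := lintegral_supConv_mollify_le hmeas hM c
      _ ≤ ∫⁻ x, symmRearr μ (supConv c k) x ∂μ := lintegral_mono fun x => supConv_symmRearr_le hk
      _ = ∫⁻ x, supConv c k x ∂μ := by
        simpa using lintegral_symmRearr_pow (μ := μ) (measurable_supConv (c := c) (k := k))
          one_ne_zero

end PolyaSzego

section TestFunction

variable {E F : Type*} [NormedAddCommGroup E] [NormedSpace ℝ E] [NormedAddCommGroup F]
  [NormedSpace ℝ F] {Ω Ω' : Set E} {g : E → ℝ}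

/-- `g` belongs to `C_c^∞(Ω)`. -/
structure IsTestFunction (Ω : Set E) (g : E → ℝ) : Prop where
  contDiff : ContDiff ℝ (⊤ : ℕ∞) g
  hasCompactSupport : HasCompactSupport g
  tsupport_subset : tsupport g ⊆ Ω

namespace IsTestFunction

theorem mono (hg : IsTestFunction Ω g) (h : Ω ⊆ Ω') : IsTestFunction Ω' g :=
  ⟨hg.contDiff, hg.hasCompactSupport, hg.tsupport_subset.trans h⟩

theorem comp (hg : IsTestFunction Ω g) {φ : F → E} (hφ : ContDiff ℝ (⊤ : ℕ∞) φ)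
    (hφ' : Topology.IsClosedEmbedding φ) : IsTestFunction (φ ⁻¹' Ω) (g ∘ φ) :=
  ⟨hg.contDiff.comp hφ, hg.hasCompactSupport.comp_isClosedEmbedding hφ',
    (tsupport_comp_subset_preimage g hφ'.continuous).trans (preimage_mono hg.tsupport_subset)⟩

theorem integrable_mul_sq [MeasurableSpace E] [OpensMeasurableSpace E] {μ : Measure E}
    [IsFiniteMeasureOnCompacts μ] (hg : IsTestFunction Ω g) {w : E → ℝ} (hw : Continuous w) :
    Integrable (fun x => w x * g x ^ 2) μ :=
  (hw.mul (hg.contDiff.continuous.pow 2)).integrable_of_hasCompactSupport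
    ((hg.hasCompactSupport.comp_left (g := (· ^ 2)) (zero_pow two_ne_zero)).mul_left)

theorem integrable_sq [MeasurableSpace E] [OpensMeasurableSpace E] {μ : Measure E}
    [IsFiniteMeasureOnCompacts μ] (hg : IsTestFunction Ω g) : Integrable (fun x => g x ^ 2) μ := by
  simpa only [one_mul] using hg.integrable_mul_sq continuous_const (w := fun _ => 1)

theorem integrable_mul_norm_fderiv_comp_sq [MeasurableSpace E] [OpensMeasurableSpace E]
    {μ : Measure E} [IsFiniteMeasureOnCompacts μ] (hg : IsTestFunction Ω g) {w : E → ℝ}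
    (hw : Continuous w) (L : F →L[ℝ] E) :
    Integrable (fun x => w x * ‖(fderiv ℝ g x).comp L‖ ^ 2) μ := by
  have hfderiv : Continuous (fderiv ℝ g) := hg.contDiff.continuous_fderiv (by simp)
  have hcont : Continuous fun x => w x * ‖(fderiv ℝ g x).comp L‖ ^ 2 := by fun_prop
  have hsupp : HasCompactSupport fun x => ‖(fderiv ℝ g x).comp L‖ ^ 2 :=
    (hg.hasCompactSupport.fderiv ℝ).comp_left (g := fun A : E →L[ℝ] ℝ => ‖A.comp L‖ ^ 2)
      (by simp)
  exact hcont.integrable_of_hasCompactSupport hsupp.mul_left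

theorem setIntegral_eq_integral [MeasurableSpace E] {μ : Measure E} (hg : IsTestFunction Ω g)
    {f : E → ℝ} (hf : ∀ x ∉ tsupport g, f x = 0) : ∫ x in Ω, f x ∂μ = ∫ x, f x ∂μ :=
  setIntegral_eq_integral_of_forall_compl_eq_zero fun x hx =>
    hf x fun hxg => hx (hg.tsupport_subset hxg)

theorem integral_sq_pos [MeasurableSpace E] [OpensMeasurableSpace E] {μ : Measure E}
    [IsFiniteMeasureOnCompacts μ] [μ.IsOpenPosMeasure] (hg : IsTestFunction Ω g) (hg0 : g ≠ 0) :
    0 < ∫ x, g x ^ 2 ∂μ := by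
  obtain ⟨x, hx⟩ := Function.ne_iff.1 hg0
  exact integral_pos_of_integrable_nonneg_nonzero (hg.contDiff.continuous.pow 2) hg.integrable_sq
    (fun _ => sq_nonneg _) (pow_ne_zero 2 hx)

end IsTestFunction

theorem exists_isTestFunction_ne_zero [FiniteDimensional ℝ E] (hΩ : IsOpen Ω)
    (hne : Ω.Nonempty) : ∃ g, IsTestFunction Ω g ∧ g ≠ 0 := by
  obtain ⟨x, hx⟩ := hne
  obtain ⟨g, hsub, hgc, hg, -, hgx⟩ := exists_contDiff_tsupport_subset (n := ⊤) (hΩ.mem_nhds hx)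
  exact ⟨g, ⟨hg, hgc, hsub⟩, Function.ne_iff.2 ⟨x, by simp [hgx]⟩⟩

end TestFunction

section RayleighInf

variable {E : Type*} [NormedAddCommGroup E] [NormedSpace ℝ E] [MeasureSpace E] {Ω : Set E}
  {N N' : (E → ℝ) → ℝ} {g : E → ℝ} {m : ℝ}

/-- The infimum of the Rayleigh quotients `N g / ‖g‖²` over nonzero `g ∈ C_c^∞(Ω)`, for an energy
functional `N`. -/
noncomputable def rayleighInf (N : (E → ℝ) → ℝ) (Ω : Set E) : ℝ :=
  sInf {q | ∃ g, IsTestFunction Ω g ∧ g ≠ 0 ∧ q = N g / ∫ x, g x ^ 2}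

theorem sInf_rayleigh_eq_rayleighInf (h : ∀ g, IsTestFunction Ω g → N g = N' g) :
    sInf {q | ∃ g : E → ℝ, ContDiff ℝ (⊤ : ℕ∞) g ∧ HasCompactSupport g ∧ tsupport g ⊆ Ω ∧ g ≠ 0 ∧
      q = N g / ∫ x in Ω, g x ^ 2} = rayleighInf N' Ω := by
  have hquot {g : E → ℝ} (hg : IsTestFunction Ω g) :
      N g / ∫ x in Ω, g x ^ 2 = N' g / ∫ x, g x ^ 2 := by
    rw [h g hg, hg.setIntegral_eq_integral fun x hx => by
      simp [image_eq_zero_of_notMem_tsupport hx]]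
  refine congrArg sInf (Set.ext fun q => exists_congr fun g => ⟨?_, ?_⟩)
  · rintro ⟨hg, hgc, hsub, hg0, rfl⟩
    exact ⟨⟨hg, hgc, hsub⟩, hg0, hquot ⟨hg, hgc, hsub⟩⟩
  · rintro ⟨hg, hg0, rfl⟩
    exact ⟨hg.contDiff, hg.hasCompactSupport, hg.tsupport_subset, hg0, (hquot hg).symm⟩

theorem rayleighInf_nonneg (hN : ∀ g, 0 ≤ N g) : 0 ≤ rayleighInf N Ω := by
  refine Real.sInf_nonneg ?_
  rintro _ ⟨g, -, -, rfl⟩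
  exact div_nonneg (hN g) (integral_nonneg fun x => sq_nonneg _)

theorem rayleighInf_mul_integral_sq_le (hN : ∀ g, 0 ≤ N g) (hg : IsTestFunction Ω g) :
    rayleighInf N Ω * ∫ x, g x ^ 2 ≤ N g := by
  have hI : 0 ≤ ∫ x, g x ^ 2 := integral_nonneg fun x => sq_nonneg _
  rcases hI.eq_or_lt with hI | hI
  · simpa [← hI] using hN g
  · refine (le_div_iff₀ hI).1 (csInf_le ⟨0, ?_⟩ ⟨g, hg, ?_, rfl⟩)
    · rintro _ ⟨f, -, -, rfl⟩
      exact div_nonneg (hN f) (integral_nonneg fun x => sq_nonneg _)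
    · rintro rfl
      simp at hI

theorem le_rayleighInf [FiniteDimensional ℝ E] [OpensMeasurableSpace E]
    [IsFiniteMeasureOnCompacts (volume : Measure E)] [(volume : Measure E).IsOpenPosMeasure]
    (hΩ : IsOpen Ω) (hne : Ω.Nonempty)
    (h : ∀ g, IsTestFunction Ω g → m * ∫ x, g x ^ 2 ≤ N g) : m ≤ rayleighInf N Ω := by
  obtain ⟨g, hg, hg0⟩ := exists_isTestFunction_ne_zero hΩ hne
  refine le_csInf ⟨_, g, hg, hg0, rfl⟩ ?_
  rintro _ ⟨f, hf, hf0, rfl⟩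
  exact (le_div_iff₀ (hf.integral_sq_pos hf0)).2 (h f hf)

end RayleighInf

section Homothety

variable {E : Type*} [NormedAddCommGroup E] [NormedSpace ℝ E]

theorem IsTestFunction.comp_smul_add {Ω : Set E} {g : E → ℝ} (hg : IsTestFunction Ω g) {t : ℝ}
    (ht : t ≠ 0) (b : E) :
    IsTestFunction ((fun x => t • x + b) ⁻¹' Ω) fun x => g (t • x + b) :=
  hg.comp (by fun_prop) ((Homeomorph.smulOfNeZero t ht).trans (.addRight b)).isClosedEmbedding

theorem fderiv_comp_smul_add (g : E → ℝ) (t : ℝ) (b x : E) :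
    fderiv ℝ (fun y => g (t • y + b)) x = t • fderiv ℝ g (t • x + b) := by
  rw [fderiv_comp_smul (f := fun y => g (y + b)), fderiv_comp_add_right]

theorem integral_comp_smul_add [MeasurableSpace E] [BorelSpace E] [FiniteDimensional ℝ E]
    (μ : Measure E) [μ.IsAddHaarMeasure] (f : E → ℝ) {t : ℝ} (ht : 0 < t) (b : E) :
    ∫ x, f (t • x + b) ∂μ = (t ^ Module.finrank ℝ E)⁻¹ * ∫ x, f x ∂μ := by
  rw [Measure.integral_comp_smul_of_nonneg μ (fun x => f (x + b)) t (hR := ht.le),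
    integral_add_right_eq_self f b, smul_eq_mul]

end Homothety

section PolyaSzegoTestFunction

variable {E : Type*} [NormedAddCommGroup E] [InnerProductSpace ℝ E] [FiniteDimensional ℝ E]
  [MeasurableSpace E] [BorelSpace E] [Nontrivial E] {μ : Measure E} [μ.IsAddHaarMeasure]

theorem ofReal_integral_sq {X : Type*} [MeasurableSpace X] {μ : Measure X} {f : X → ℝ}
    (hf : Integrable (fun x => f x ^ 2) μ) :
    ENNReal.ofReal (∫ x, f x ^ 2 ∂μ) = ∫⁻ x, ‖f x‖ₑ ^ 2 ∂μ := by
  rw [ofReal_integral_eq_lintegral_ofReal hf (Eventually.of_forall fun x => sq_nonneg _)]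
  refine lintegral_congr fun x => ?_
  rw [← ofReal_norm, ← ENNReal.ofReal_pow (norm_nonneg _), Real.norm_eq_abs, sq_abs]

theorem IsTestFunction.exists_isTestFunction_ball {Ω : Set E} {g : E → ℝ}
    (hg : IsTestFunction Ω g) {R R' : ℝ} (hΩ : μ Ω ≤ μ (Metric.ball 0 R)) (hRR' : R < R') {m : ℝ}
    (hm : 0 ≤ m) (hmg : m < ∫ x, g x ^ 2 ∂μ) :
    ∃ ψ, IsTestFunction (Metric.ball 0 R') ψ ∧ m < ∫ x, ψ x ^ 2 ∂μ ∧
      ∫ x, ‖fderiv ℝ ψ x‖ ^ 2 ∂μ ≤ ∫ x, ‖fderiv ℝ g x‖ ^ 2 ∂μ := by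
  set k : E → ℝ≥0∞ := fun y => ‖g y‖ₑ
  have hmeas : Measurable (symmRearr μ k) := measurable_symmRearr
  obtain ⟨M, hM⟩ := exists_symmRearr_enorm_le (μ := μ) hg.contDiff.continuous hg.hasCompactSupport
  have hsupp : Function.support (symmRearr μ k) ⊆ Metric.ball 0 R := by
    refine support_symmRearr_subset ((measure_mono ?_).trans hΩ)
    simpa [k] using (subset_tsupport g).trans hg.tsupport_subset
  have hmk : ENNReal.ofReal m < ∫⁻ x, symmRearr μ k x ^ 2 ∂μ := by
    rw [lintegral_symmRearr_pow hg.contDiff.continuous.enorm.measurable two_ne_zero]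
    refine ((ENNReal.ofReal_lt_ofReal_iff_of_nonneg hm).2 hmg).trans_eq ?_
    exact ofReal_integral_sq hg.integrable_sq
  obtain ⟨φ, hφ, hmφ⟩ := exists_lt_lintegral_mollify_sq hmeas hM hmk (sub_pos.2 hRR')
  have hψ : IsTestFunction (Metric.ball 0 R') (mollify μ φ (symmRearr μ k)) :=
    ⟨contDiff_mollify hmeas hM, hasCompactSupport_mollify hsupp,
      (tsupport_mollify_subset hsupp).trans (Metric.closedBall_subset_ball (by linarith))⟩
  refine ⟨_, hψ, ?_, integral_norm_fderiv_mollify_symmRearr_sq_le (contDiff_infty.1 hg.contDiff 2)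
    hg.hasCompactSupport φ⟩
  refine (ENNReal.ofReal_lt_ofReal_iff_of_nonneg hm).1 (hmφ.trans_eq ?_)
  simp only [ofReal_integral_sq hψ.integrable_sq, Real.enorm_of_nonneg (mollify_nonneg _)]

end PolyaSzegoTestFunction

section Dirichlet

variable {d : ℕ} {Ω : Set (EuclideanSpace ℝ (Fin d))} {g : EuclideanSpace ℝ (Fin d) → ℝ}
  {c c' : EuclideanSpace ℝ (Fin d)} {r r' : ℝ}

theorem dirichletMu1_eq_rayleighInf :
    dirichletMu1 d Ω = rayleighInf (fun g => ∫ x, ‖fderiv ℝ g x‖ ^ 2) Ω :=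
  sInf_rayleigh_eq_rayleighInf (N := fun g => ∫ x in Ω, ‖gradient g x‖ ^ 2) fun g hg => by
    simp only [norm_gradient]
    exact hg.setIntegral_eq_integral fun x hx => by simp [fderiv_of_notMem_tsupport ℝ hx]

theorem dirichletMu1_nonneg : 0 ≤ dirichletMu1 d Ω := by
  rw [dirichletMu1_eq_rayleighInf]
  exact rayleighInf_nonneg fun g => integral_nonneg fun x => sq_nonneg _

theorem dirichletMu1_mul_integral_sq_le (hg : IsTestFunction Ω g) :
    dirichletMu1 d Ω * ∫ x, g x ^ 2 ≤ ∫ x, ‖fderiv ℝ g x‖ ^ 2 := by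
  rw [dirichletMu1_eq_rayleighInf]
  exact rayleighInf_mul_integral_sq_le (fun g => integral_nonneg fun x => sq_nonneg _) hg

theorem le_dirichletMu1 {m : ℝ} (hΩ : IsOpen Ω) (hne : Ω.Nonempty)
    (h : ∀ g, IsTestFunction Ω g → m * ∫ x, g x ^ 2 ≤ ∫ x, ‖fderiv ℝ g x‖ ^ 2) :
    m ≤ dirichletMu1 d Ω := by
  rw [dirichletMu1_eq_rayleighInf]
  exact le_rayleighInf hΩ hne h

theorem integral_norm_fderiv_sq_comp_smul_add (g : EuclideanSpace ℝ (Fin d) → ℝ) {t : ℝ}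
    (ht : 0 < t) (b : EuclideanSpace ℝ (Fin d)) :
    ∫ x, ‖fderiv ℝ (fun y => g (t • y + b)) x‖ ^ 2 =
      (t ^ d)⁻¹ * (t ^ 2 * ∫ x, ‖fderiv ℝ g x‖ ^ 2) := by
  simp only [fderiv_comp_smul_add, norm_smul, mul_pow, Real.norm_eq_abs, sq_abs,
    integral_const_mul]
  rw [integral_comp_smul_add volume (fun x => ‖fderiv ℝ g x‖ ^ 2) ht b, finrank_euclideanSpace_fin]
  ring

theorem dirichletMu1_preimage_smul_add_le (hΩ : IsOpen Ω) (hne : Ω.Nonempty) {t : ℝ} (ht : 0 < t)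
    (b : EuclideanSpace ℝ (Fin d)) :
    dirichletMu1 d ((fun x => t • x + b) ⁻¹' Ω) ≤ t ^ 2 * dirichletMu1 d Ω := by
  rw [← div_le_iff₀' (by positivity)]
  refine le_dirichletMu1 hΩ hne fun g hg => ?_
  have h := dirichletMu1_mul_integral_sq_le (hg.comp_smul_add ht.ne' b)
  rw [integral_norm_fderiv_sq_comp_smul_add g ht,
    integral_comp_smul_add volume (fun x => g x ^ 2) ht, finrank_euclideanSpace_fin, mul_left_comm,
    mul_le_mul_iff_right₀ (by positivity)] at h
  rwa [div_mul_eq_mul_div, div_le_iff₀' (by positivity)]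

theorem dirichletMu1_ball_mul_sq_le (hr : 0 < r) (hr' : 0 < r') :
    dirichletMu1 d (Metric.ball c r) * r ^ 2 ≤ dirichletMu1 d (Metric.ball c' r') * r' ^ 2 := by
  have ht : 0 < r' / r := by positivity
  have hpre : (fun x => (r' / r) • x + (c' - (r' / r) • c)) ⁻¹' Metric.ball c' r' =
      Metric.ball c r := by
    ext x
    have : (r' / r) • x + (c' - (r' / r) • c) - c' = (r' / r) • (x - c) := by module
    rw [mem_preimage, mem_ball_iff_norm, mem_ball_iff_norm, this, norm_smul_of_nonneg ht.le,
      div_mul_eq_mul_div, div_lt_iff₀ hr, mul_lt_mul_iff_right₀ hr']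
  have h := dirichletMu1_preimage_smul_add_le (Ω := Metric.ball c' r') Metric.isOpen_ball
    (Metric.nonempty_ball.2 hr') ht (c' - (r' / r) • c)
  rwa [hpre, div_pow, div_mul_eq_mul_div, le_div_iff₀ (by positivity), mul_comm (r' ^ 2)] at h

theorem dirichletMu1_ball_mul_sq (hr : 0 < r) (hr' : 0 < r') :
    dirichletMu1 d (Metric.ball c r) * r ^ 2 = dirichletMu1 d (Metric.ball c' r') * r' ^ 2 :=
  (dirichletMu1_ball_mul_sq_le hr hr').antisymm (dirichletMu1_ball_mul_sq_le hr' hr)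

/- The rearranged and mollified competitor lives on a ball slightly larger than `Ω^*` and has lost
a little mass; both losses are absorbed in `θ → 1`. -/
theorem dirichletMu1_ball_le [NeZero d] (hΩ : IsOpen Ω) (hne : Ω.Nonempty) (hr : 0 < r)
    (hvol : volume Ω ≤ volume (Metric.ball c r)) :
    dirichletMu1 d (Metric.ball c r) ≤ dirichletMu1 d Ω := by
  refine le_dirichletMu1 hΩ hne fun g hg => ?_
  set I := ∫ x, g x ^ 2
  set G := ∫ x, ‖fderiv ℝ g x‖ ^ 2
  obtain hI | hI : 0 = I ∨ 0 < I := (integral_nonneg fun x => sq_nonneg _ : 0 ≤ I).eq_or_lt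
  · rw [← hI, mul_zero]
    exact integral_nonneg fun x => sq_nonneg _
  have hbound {θ : ℝ} (hθ : θ ∈ Ioo (0 : ℝ) 1) :
      dirichletMu1 d (Metric.ball c r) * θ ^ 2 * (θ * I) ≤ G := by
    obtain ⟨hθ0, hθ1⟩ := hθ
    have hr' : r < r / θ := by rwa [lt_div_iff₀ hθ0, mul_lt_iff_lt_one_right hr]
    obtain ⟨ψ, hψ, hψI, hψG⟩ := hg.exists_isTestFunction_ball
      (hvol.trans_eq (Measure.addHaar_ball_center volume c r)) hr'
      (mul_nonneg hθ0.le hI.le) (mul_lt_of_lt_one_left hI hθ1)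
    have hscale : dirichletMu1 d (Metric.ball c r) * θ ^ 2 =
        dirichletMu1 d (Metric.ball 0 (r / θ)) := by
      have := dirichletMu1_ball_mul_sq (d := d) (c := c) (c' := 0) hr (hr.trans hr')
      field_simp at this ⊢
      exact this
    calc dirichletMu1 d (Metric.ball c r) * θ ^ 2 * (θ * I)
        ≤ dirichletMu1 d (Metric.ball c r) * θ ^ 2 * ∫ x, ψ x ^ 2 := by
          gcongr
          exact mul_nonneg dirichletMu1_nonneg (sq_nonneg θ)
      _ ≤ ∫ x, ‖fderiv ℝ ψ x‖ ^ 2 := by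
          rw [hscale]
          exact dirichletMu1_mul_integral_sq_le hψ
      _ ≤ G := hψG
  have hlim : Tendsto (fun θ : ℝ => dirichletMu1 d (Metric.ball c r) * θ ^ 2 * (θ * I)) (𝓝[<] 1)
      (𝓝 (dirichletMu1 d (Metric.ball c r) * I)) :=
    tendsto_nhdsWithin_of_tendsto_nhds (Continuous.tendsto' (by fun_prop) _ _ (by simp))
  exact le_of_tendsto hlim (eventually_of_mem (Ioo_mem_nhdsLT one_pos) fun θ => hbound)

end Dirichlet

section UnitBall

variable {d : ℕ} {Ω : Set (EuclideanSpace ℝ (Fin d))} {c c' : EuclideanSpace ℝ (Fin d)} {b r : ℝ}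

theorem tau_pos : 0 < tau d := by
  unfold tau
  positivity

theorem toReal_volume_ball [NeZero d] (hr : 0 ≤ r) :
    (volume (Metric.ball c r)).toReal = tau d * r ^ d := by
  have hsqrt : √Real.pi ^ d = Real.pi ^ ((d : ℝ) / 2) := by
    rw [Real.sqrt_eq_rpow, ← Real.rpow_mul_natCast Real.pi_pos.le, one_div_mul_eq_div]
  rw [EuclideanSpace.volume_ball, ENNReal.toReal_mul, ENNReal.toReal_pow, ENNReal.toReal_ofReal hr,
    Fintype.card_fin, ENNReal.toReal_ofReal (by positivity), hsqrt, add_comm, mul_comm, tau]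

theorem pos_of_volume_ball_ne_zero (hr : volume (Metric.ball c r) ≠ 0) : 0 < r :=
  Metric.nonempty_ball.1 (nonempty_of_measure_ne_zero hr)

theorem exists_pos_volume_ball_zero_eq [NeZero d] (hΩ : IsOpen Ω) (hne : Ω.Nonempty)
    (hfin : volume Ω ≠ ∞) :
    ∃ r, 0 < r ∧ volume (Metric.ball (0 : EuclideanSpace ℝ (Fin d)) r) = volume Ω := by
  obtain ⟨r, -, hr⟩ :=
    exists_addHaar_ball_zero_eq (volume : Measure (EuclideanSpace ℝ (Fin d))) hfin
  exact ⟨r, pos_of_volume_ball_ne_zero (hr ▸ (hΩ.measure_pos volume hne).ne'), hr⟩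

theorem radius_rpow_eq [NeZero d] (hr : 0 ≤ r) (a : ℝ) :
    r ^ a = ((volume (Metric.ball c r)).toReal / tau d) ^ (a / d) := by
  rw [toReal_volume_ball hr, mul_div_cancel_left₀ _ tau_pos.ne', ← Real.rpow_natCast,
    ← Real.rpow_mul hr, mul_div_cancel₀ a (NeZero.ne _)]

theorem dirichletMu1_ball_eq [NeZero d] (hb : volume (Metric.ball c b) = 1) (hr : 0 < r) :
    dirichletMu1 d (Metric.ball c' r) =
      dirichletMu1 d (Metric.ball c b) * (volume (Metric.ball c' r)).toReal ^ (-2 / d : ℝ) := by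
  have hb0 : 0 < b := pos_of_volume_ball_ne_zero (hb ▸ one_ne_zero)
  have hscale := dirichletMu1_ball_mul_sq (c := c') (c' := c) hr hb0
  rw [← Real.rpow_two, ← Real.rpow_two, radius_rpow_eq (c := c) hb0.le,
    radius_rpow_eq (c := c') hr.le, hb, ENNReal.toReal_one, one_div,
    Real.div_rpow ENNReal.toReal_nonneg tau_pos.le, Real.inv_rpow tau_pos.le] at hscale
  have hv : 0 < (volume (Metric.ball c' r)).toReal :=
    ENNReal.toReal_pos (Metric.measure_ball_pos volume c' hr).ne' measure_ball_lt_top.ne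
  have ht : 0 < tau d ^ (2 / d : ℝ) := Real.rpow_pos_of_pos tau_pos _
  rw [neg_div, Real.rpow_neg hv.le]
  field_simp at hscale ⊢
  exact hscale

theorem dirichletMu1_ball_mul_volume_rpow_le [NeZero d] (hΩ : IsOpen Ω) (hne : Ω.Nonempty)
    (hfin : volume Ω ≠ ∞) (hb : volume (Metric.ball c b) = 1) :
    dirichletMu1 d (Metric.ball c b) * (volume Ω).toReal ^ (-2 / d : ℝ) ≤ dirichletMu1 d Ω := by
  obtain ⟨r, hr, hvol⟩ := exists_pos_volume_ball_zero_eq hΩ hne hfin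
  rw [← hvol, ← dirichletMu1_ball_eq hb hr]
  exact dirichletMu1_ball_le hΩ hne hr hvol.ge

end UnitBall

section Schrodinger

variable {d : ℕ} {s σ : ℝ} {Ω : Set (EuclideanSpace ℝ (Fin d))} {f : EuclideanSpace ℝ (Fin d) → ℝ}

theorem continuous_norm_rpow {E : Type*} [SeminormedAddCommGroup E] {a : ℝ} (ha : 0 ≤ a) :
    Continuous fun x : E => ‖x‖ ^ a :=
  continuous_norm.rpow_const fun _ => Or.inr ha

theorem IsTestFunction.integrable_norm_rpow_mul_sq (hf : IsTestFunction Ω f) (hs : 0 ≤ s) :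
    Integrable fun x => ‖x‖ ^ (2 * s) * f x ^ 2 :=
  hf.integrable_mul_sq (continuous_norm_rpow (mul_nonneg zero_le_two hs))

theorem IsTestFunction.integrable_norm_fderiv_sq (hf : IsTestFunction Ω f) :
    Integrable fun x => ‖fderiv ℝ f x‖ ^ 2 := by
  simpa using hf.integrable_mul_norm_fderiv_comp_sq (w := fun _ => 1) continuous_const
    (ContinuousLinearMap.id ℝ (EuclideanSpace ℝ (Fin d)))

theorem schrodingerE1_eq_rayleighInf (hs : 0 ≤ s) :
    schrodingerE1 d s σ Ω = rayleighInf
      (fun f => (∫ x, ‖fderiv ℝ f x‖ ^ 2) + σ * ∫ x, ‖x‖ ^ (2 * s) * f x ^ 2) Ω :=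
  sInf_rayleigh_eq_rayleighInf
      (N := fun f => ∫ x in Ω, (‖gradient f x‖ ^ 2 + σ * ‖x‖ ^ (2 * s) * f x ^ 2)) fun f hf => by
    simp only [norm_gradient, mul_assoc]
    rw [hf.setIntegral_eq_integral, integral_add hf.integrable_norm_fderiv_sq
      ((hf.integrable_norm_rpow_mul_sq hs).const_mul σ), integral_const_mul]
    exact fun x hx => by
      simp [fderiv_of_notMem_tsupport ℝ hx, image_eq_zero_of_notMem_tsupport hx]

theorem schrodingerE1_mul_integral_sq_le (hs : 0 ≤ s) (hσ : 0 ≤ σ) (hf : IsTestFunction Ω f) :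
    schrodingerE1 d s σ Ω * ∫ x, f x ^ 2 ≤
      (∫ x, ‖fderiv ℝ f x‖ ^ 2) + σ * ∫ x, ‖x‖ ^ (2 * s) * f x ^ 2 := by
  rw [schrodingerE1_eq_rayleighInf hs]
  exact rayleighInf_mul_integral_sq_le (fun g => by positivity) hf

theorem le_schrodingerE1 {m : ℝ} (hs : 0 ≤ s) (hΩ : IsOpen Ω) (hne : Ω.Nonempty)
    (h : ∀ f, IsTestFunction Ω f → m * ∫ x, f x ^ 2 ≤
      (∫ x, ‖fderiv ℝ f x‖ ^ 2) + σ * ∫ x, ‖x‖ ^ (2 * s) * f x ^ 2) :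
    m ≤ schrodingerE1 d s σ Ω := by
  rw [schrodingerE1_eq_rayleighInf hs]
  exact le_rayleighInf hΩ hne h

theorem schrodingerE1_nonneg (hs : 0 ≤ s) (hσ : 0 ≤ σ) : 0 ≤ schrodingerE1 d s σ Ω := by
  rw [schrodingerE1_eq_rayleighInf hs]
  exact rayleighInf_nonneg fun g => by positivity

theorem integral_norm_rpow_mul_sq_comp_smul (f : EuclideanSpace ℝ (Fin d) → ℝ) {t : ℝ}
    (ht : 0 < t) (a : ℝ) :
    ∫ x, ‖x‖ ^ a * f (t • x) ^ 2 = (t ^ d)⁻¹ * ((t ^ a)⁻¹ * ∫ x, ‖x‖ ^ a * f x ^ 2) := by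
  have hnorm (x : EuclideanSpace ℝ (Fin d)) :
      ‖x‖ ^ a * f (t • x) ^ 2 = (t ^ a)⁻¹ * (‖t • x‖ ^ a * f (t • x) ^ 2) := by
    rw [norm_smul_of_nonneg ht.le, Real.mul_rpow ht.le (norm_nonneg x), mul_assoc,
      inv_mul_cancel_left₀ (Real.rpow_pos_of_pos ht a).ne']
  simp only [hnorm, integral_const_mul]
  rw [Measure.integral_comp_smul_of_nonneg volume (fun x => ‖x‖ ^ a * f x ^ 2) t (hR := ht.le),
    finrank_euclideanSpace_fin, smul_eq_mul, mul_left_comm]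

theorem schrodingerE1_one_univ_mul_integral_sq_le (hs : 0 ≤ s) {t : ℝ} (ht : 0 < t)
    (hf : IsTestFunction Ω f) :
    schrodingerE1 d s 1 univ * ∫ x, f x ^ 2 ≤
      t ^ 2 * (∫ x, ‖fderiv ℝ f x‖ ^ 2) + (t ^ (2 * s))⁻¹ * ∫ x, ‖x‖ ^ (2 * s) * f x ^ 2 := by
  have h := schrodingerE1_mul_integral_sq_le (d := d) hs zero_le_one
    ((hf.comp_smul_add ht.ne' 0).mono (subset_univ _))
  rw [integral_norm_fderiv_sq_comp_smul_add f ht,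
    integral_comp_smul_add volume (fun x => f x ^ 2) ht, finrank_euclideanSpace_fin] at h
  simp only [add_zero, one_mul] at h
  rwa [integral_norm_rpow_mul_sq_comp_smul f ht, ← mul_add, mul_left_comm,
    mul_le_mul_iff_right₀ (by positivity)] at h

theorem rpow_mul_schrodingerE1_one_univ_le (hs : 0 ≤ s) (hσ : 0 ≤ σ) (hΩ : IsOpen Ω)
    (hne : Ω.Nonempty) :
    σ ^ (1 / (s + 1)) * schrodingerE1 d s 1 univ ≤ schrodingerE1 d s σ Ω := by
  have hs1 : s + 1 ≠ 0 := by positivity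
  obtain rfl | hσ0 := hσ.eq_or_lt
  · rw [Real.zero_rpow (one_div_ne_zero hs1), zero_mul]
    exact schrodingerE1_nonneg hs le_rfl
  refine le_schrodingerE1 hs hΩ hne fun f hf => ?_
  set t : ℝ := σ ^ (-(1 / (2 * (s + 1))))
  have ht : 0 < t := Real.rpow_pos_of_pos hσ0 _
  have ht2 : σ ^ (1 / (s + 1)) * t ^ 2 = 1 := by
    rw [← Real.rpow_two, ← Real.rpow_mul hσ, ← Real.rpow_add hσ0]
    convert Real.rpow_zero σ using 2
    field_simp
    ring
  have hts : σ ^ (1 / (s + 1)) * (t ^ (2 * s))⁻¹ = σ := by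
    rw [← Real.rpow_mul hσ, ← Real.rpow_neg hσ, ← Real.rpow_add hσ0]
    convert Real.rpow_one σ using 2
    field_simp
    ring
  calc σ ^ (1 / (s + 1)) * schrodingerE1 d s 1 univ * ∫ x, f x ^ 2
      = σ ^ (1 / (s + 1)) * (schrodingerE1 d s 1 univ * ∫ x, f x ^ 2) := mul_assoc _ _ _
    _ ≤ σ ^ (1 / (s + 1)) * (t ^ 2 * (∫ x, ‖fderiv ℝ f x‖ ^ 2) +
          (t ^ (2 * s))⁻¹ * ∫ x, ‖x‖ ^ (2 * s) * f x ^ 2) := by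
        gcongr
        exact schrodingerE1_one_univ_mul_integral_sq_le hs ht hf
    _ = _ := by rw [mul_add, ← mul_assoc, ← mul_assoc, ht2, hts, one_mul]

theorem schrodingerE1_ball_le (hs : 0 ≤ s) (hσ : 0 ≤ σ) {r : ℝ} (hr : 0 < r) :
    schrodingerE1 d s σ (Metric.ball 0 r) ≤
      dirichletMu1 d (Metric.ball 0 r) + σ * r ^ (2 * s) := by
  rw [← sub_le_iff_le_add]
  refine le_dirichletMu1 Metric.isOpen_ball (Metric.nonempty_ball.2 hr) fun f hf => ?_
  have hpot : ∫ x, ‖x‖ ^ (2 * s) * f x ^ 2 ≤ r ^ (2 * s) * ∫ x, f x ^ 2 := by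
    rw [← integral_const_mul]
    refine integral_mono (hf.integrable_norm_rpow_mul_sq hs) (hf.integrable_sq.const_mul _)
      fun x => ?_
    by_cases hx : x ∈ tsupport f
    · have hxr : ‖x‖ ≤ r := (mem_ball_zero_iff.1 (hf.tsupport_subset hx)).le
      dsimp only
      gcongr
    · simp [image_eq_zero_of_notMem_tsupport hx]
  linarith [schrodingerE1_mul_integral_sq_le hs hσ hf, mul_le_mul_of_nonneg_left hpot hσ]

theorem dirichletMu1_add_mul_le_schrodingerE1 (hs : 0 ≤ s) {τ θ : ℝ} (hτ : 0 ≤ τ) (hθ0 : 0 ≤ θ)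
    (hθ1 : θ ≤ 1) (hΩ : IsOpen Ω) (hne : Ω.Nonempty) :
    (1 - θ) * dirichletMu1 d Ω + θ * schrodingerE1 d s τ Ω ≤ schrodingerE1 d s (θ * τ) Ω := by
  refine le_schrodingerE1 hs hΩ hne fun f hf => ?_
  have hD := mul_le_mul_of_nonneg_left (dirichletMu1_mul_integral_sq_le hf) (sub_nonneg.2 hθ1)
  have hS := mul_le_mul_of_nonneg_left (schrodingerE1_mul_integral_sq_le hs hτ hf) hθ0
  linarith

/- For `σ < τ` write `σ = θτ`; concavity in `σ` and the scaling bound at `τ` give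
`(1 - p + pθ) τ^{1/(s+1)} E₁(1, ℝ^d)`, and `θ^p ≤ 1 - p + pθ`. -/
theorem rpow_mul_rpow_mul_schrodingerE1_one_univ_le (hs : 0 ≤ s) (hσ : 0 ≤ σ) {τ p : ℝ}
    (hτ : 0 ≤ τ) (hp : 0 ≤ p) (hp' : p ≤ 1 / (s + 1)) (hΩ : IsOpen Ω) (hne : Ω.Nonempty)
    (h : (1 - p) * (τ ^ (1 / (s + 1)) * schrodingerE1 d s 1 univ) ≤ dirichletMu1 d Ω) :
    σ ^ p * τ ^ (1 / (s + 1) - p) * schrodingerE1 d s 1 univ ≤ schrodingerE1 d s σ Ω := by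
  have hE : 0 ≤ schrodingerE1 d s 1 univ := schrodingerE1_nonneg hs zero_le_one
  have hq : 0 ≤ 1 / (s + 1) - p := sub_nonneg.2 hp'
  rcases le_or_gt τ σ with hτσ | hστ
  · calc σ ^ p * τ ^ (1 / (s + 1) - p) * schrodingerE1 d s 1 univ
        ≤ σ ^ p * σ ^ (1 / (s + 1) - p) * schrodingerE1 d s 1 univ := by gcongr
      _ = σ ^ (1 / (s + 1)) * schrodingerE1 d s 1 univ := by
          rw [← Real.rpow_add_of_nonneg hσ hp hq, add_sub_cancel]
      _ ≤ schrodingerE1 d s σ Ω := rpow_mul_schrodingerE1_one_univ_le hs hσ hΩ hne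
  · have hτ0 : 0 < τ := hσ.trans_lt hστ
    obtain ⟨θ, hθ⟩ : ∃ θ, θ = σ / τ := ⟨_, rfl⟩
    have hθ0 : 0 ≤ θ := hθ ▸ div_nonneg hσ hτ
    have hθ1 : θ ≤ 1 := hθ ▸ (div_le_one hτ0).2 hστ.le
    have hσθ : σ = θ * τ := by rw [hθ, div_mul_cancel₀ σ hτ0.ne']
    have hp1 : p ≤ 1 := hp'.trans (div_le_one_of_le₀ (by linarith) (by positivity))
    have hθp : θ ^ p ≤ 1 - p + p * θ := by
      have := Real.geom_mean_le_arith_mean2_weighted hp (sub_nonneg.2 hp1) hθ0 zero_le_one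
        (add_sub_cancel p 1)
      rw [Real.one_rpow] at this
      linarith
    set e := τ ^ (1 / (s + 1)) * schrodingerE1 d s 1 univ
    calc σ ^ p * τ ^ (1 / (s + 1) - p) * schrodingerE1 d s 1 univ
        = θ ^ p * e := by
          rw [hσθ, Real.mul_rpow hθ0 hτ, mul_assoc (θ ^ p), ← Real.rpow_add hτ0, add_sub_cancel,
            mul_assoc]
      _ ≤ (1 - p + p * θ) * e := by gcongr
      _ = (1 - θ) * ((1 - p) * e) + θ * e := by ring
      _ ≤ (1 - θ) * dirichletMu1 d Ω + θ * schrodingerE1 d s τ Ω := by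
          have := sub_nonneg.2 hθ1
          gcongr
          exact rpow_mul_schrodingerE1_one_univ_le hs hτ hΩ hne
      _ ≤ schrodingerE1 d s σ Ω :=
          hσθ ▸ dirichletMu1_add_mul_le_schrodingerE1 hs hτ hθ0 hθ1 hΩ hne

theorem le_schrodingerE1_of_volume_ball_eq [NeZero d] (hs : 0 ≤ s) (hσ : 0 ≤ σ) {p r : ℝ}
    (hp : 0 ≤ p) (hp' : p ≤ 1 / (s + 1)) (hp1 : p < 1) (hΩ : IsOpen Ω) (hne : Ω.Nonempty)
    (hr : 0 < r) (hvol : volume (Metric.ball (0 : EuclideanSpace ℝ (Fin d)) r) = volume Ω) :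
    σ ^ p * (p / (1 - p) * (dirichletMu1 d (Metric.ball 0 r) * r ^ (-(2 * s)))) ^
      (1 / (s + 1) - p) * schrodingerE1 d s 1 univ ≤ schrodingerE1 d s σ Ω := by
  have hp_compl : 0 < 1 - p := sub_pos.2 hp1
  set τ := p / (1 - p) * (dirichletMu1 d (Metric.ball 0 r) * r ^ (-(2 * s)))
  have hτ : 0 ≤ τ := mul_nonneg (by positivity) (mul_nonneg dirichletMu1_nonneg (by positivity))
  refine rpow_mul_rpow_mul_schrodingerE1_one_univ_le hs hσ hτ hp hp' hΩ hne ?_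
  have hrs : r ^ (-(2 * s)) * r ^ (2 * s) = 1 := by
    rw [← Real.rpow_add hr, neg_add_cancel, Real.rpow_zero]
  calc (1 - p) * (τ ^ (1 / (s + 1)) * schrodingerE1 d s 1 univ)
      ≤ (1 - p) * (dirichletMu1 d (Metric.ball 0 r) + τ * r ^ (2 * s)) := by
        gcongr
        exact (rpow_mul_schrodingerE1_one_univ_le hs hτ Metric.isOpen_ball
          (Metric.nonempty_ball.2 hr)).trans (schrodingerE1_ball_le hs hτ hr)
    _ = dirichletMu1 d (Metric.ball 0 r) := by
        rw [show τ * r ^ (2 * s) = p / (1 - p) * dirichletMu1 d (Metric.ball 0 r) by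
          rw [mul_assoc, mul_assoc, hrs, mul_one]]
        field_simp
        ring
    _ ≤ dirichletMu1 d Ω := dirichletMu1_ball_le hΩ hne hr hvol.ge

theorem le_schrodingerE1_of_volume_ball_eq_one [NeZero d] (hs : 0 ≤ s) (hσ : 0 ≤ σ) {p b : ℝ}
    (hp : 0 ≤ p) (hp' : p ≤ 1 / (s + 1)) (hp1 : p < 1) (hΩ : IsOpen Ω) (hne : Ω.Nonempty)
    (hfin : volume Ω ≠ ∞) {c : EuclideanSpace ℝ (Fin d)} (hb : volume (Metric.ball c b) = 1) :
    σ ^ p * (p / (1 - p) * (tau d ^ (2 * s / d) * dirichletMu1 d (Metric.ball c b) *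
      (volume Ω).toReal ^ (-(2 * s + 2) / d))) ^ (1 / (s + 1) - p) *
      schrodingerE1 d s 1 univ ≤ schrodingerE1 d s σ Ω := by
  obtain ⟨r, hr, hvol⟩ := exists_pos_volume_ball_zero_eq hΩ hne hfin
  have hv : 0 < (volume Ω).toReal := ENNReal.toReal_pos (hΩ.measure_pos volume hne).ne' hfin
  have hball : dirichletMu1 d (Metric.ball 0 r) * r ^ (-(2 * s)) =
      tau d ^ (2 * s / d) * dirichletMu1 d (Metric.ball c b) *
        (volume Ω).toReal ^ (-(2 * s + 2) / d) := by
    rw [dirichletMu1_ball_eq hb hr, radius_rpow_eq (c := (0 : EuclideanSpace ℝ (Fin d))) hr.le,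
      hvol, Real.div_rpow hv.le tau_pos.le, neg_div _ (2 * s), Real.rpow_neg tau_pos.le,
      div_inv_eq_mul, show (-(2 * s + 2) / d : ℝ) = -2 / d + -(2 * s / d) by ring, Real.rpow_add hv]
    ring
  rw [← hball]
  exact le_schrodingerE1_of_volume_ball_eq hs hσ hp hp' hp1 hΩ hne hr hvol

end Schrodinger

section Slice

variable {E F : Type*} [NormedAddCommGroup E] [NormedSpace ℝ E] [NormedAddCommGroup F]
  [NormedSpace ℝ F] {A : Set E} {B : Set F} {u : E × F → ℝ}

theorem IsTestFunction.slice_left (hu : IsTestFunction (A ×ˢ B) u) (y : F) :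
    IsTestFunction A fun x => u (x, y) := by
  have hφ : Topology.IsClosedEmbedding fun x : E => (x, y) :=
    ⟨isEmbedding_prodMkLeft y, by
      simpa only [prod_singleton, image_univ] using (isClosed_univ.prod isClosed_singleton :
        IsClosed ((univ : Set E) ×ˢ {y}))⟩
  exact (hu.comp (by fun_prop) hφ).mono fun x hx => hx.1

theorem IsTestFunction.slice_right (hu : IsTestFunction (A ×ˢ B) u) (x : E) :
    IsTestFunction B fun y => u (x, y) := by
  have hφ : Topology.IsClosedEmbedding fun y : F => (x, y) :=
    ⟨isEmbedding_prodMkRight x, by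
      simpa only [singleton_prod, image_univ] using (isClosed_singleton.prod isClosed_univ :
        IsClosed ({x} ×ˢ (univ : Set F)))⟩
  exact (hu.comp (by fun_prop) hφ).mono fun y hy => hy.2

theorem fderiv_slice_left (hu : Differentiable ℝ u) (x : E) (y : F) :
    fderiv ℝ (fun x => u (x, y)) x = (fderiv ℝ u (x, y)).comp (.inl ℝ E F) :=
  ((hu (x, y)).hasFDerivAt.comp x (hasFDerivAt_prodMk_left x y)).fderiv

theorem fderiv_slice_right (hu : Differentiable ℝ u) (x : E) (y : F) :
    fderiv ℝ (fun y => u (x, y)) y = (fderiv ℝ u (x, y)).comp (.inr ℝ E F) :=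
  ((hu (x, y)).hasFDerivAt.comp y (hasFDerivAt_prodMk_right x y)).fderiv

end Slice

section Grushin

variable {d₁ d₂ : ℕ} {s : ℝ}

theorem grushinLambda1_eq_rayleighInf (hs : 0 ≤ s)
    {Ω : Set (EuclideanSpace ℝ (Fin d₁) × EuclideanSpace ℝ (Fin d₂))} :
    grushinLambda1 d₁ d₂ s Ω = rayleighInf
      (fun u => (∫ z, ‖(fderiv ℝ u z).comp (.inl ℝ _ _)‖ ^ 2) +
        ∫ z, ‖z.1‖ ^ (2 * s) * ‖(fderiv ℝ u z).comp (.inr ℝ _ _)‖ ^ 2) Ω :=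
  sInf_rayleigh_eq_rayleighInf (N := fun u => ∫ x in Ω,
      (‖gradient (fun y => u (y, x.2)) x.1‖ ^ 2
        + ‖x.1‖ ^ (2 * s) * ‖gradient (fun y => u (x.1, y)) x.2‖ ^ 2)) fun u hu => by
    have hdiff : Differentiable ℝ u := hu.contDiff.differentiable (by simp)
    have hw : Continuous fun z : EuclideanSpace ℝ (Fin d₁) × EuclideanSpace ℝ (Fin d₂) =>
        ‖z.1‖ ^ (2 * s) := (continuous_norm_rpow (mul_nonneg zero_le_two hs)).comp continuous_fst
    simp only [norm_gradient, fderiv_slice_left hdiff, fderiv_slice_right hdiff]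
    rw [hu.setIntegral_eq_integral, integral_add]
    · simpa only [one_mul] using
        hu.integrable_mul_norm_fderiv_comp_sq (w := fun _ => 1) continuous_const _
    · exact hu.integrable_mul_norm_fderiv_comp_sq hw _
    · exact fun x hx => by simp [fderiv_of_notMem_tsupport ℝ hx]

variable {Ω₁ : Set (EuclideanSpace ℝ (Fin d₁))} {Ω₂ : Set (EuclideanSpace ℝ (Fin d₂))}
  {u : EuclideanSpace ℝ (Fin d₁) × EuclideanSpace ℝ (Fin d₂) → ℝ}

theorem dirichletMu1_mul_integral_weight_mul_sq_le (hu : IsTestFunction (Ω₁ ×ˢ Ω₂) u)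
    {w : EuclideanSpace ℝ (Fin d₁) → ℝ} (hw : Continuous w) (hw0 : ∀ x, 0 ≤ w x) :
    dirichletMu1 d₂ Ω₂ * ∫ z, w z.1 * u z ^ 2 ≤
      ∫ z, w z.1 * ‖(fderiv ℝ u z).comp (.inr ℝ _ _)‖ ^ 2 := by
  have hdiff : Differentiable ℝ u := hu.contDiff.differentiable (by simp)
  have hmass : Integrable (fun z => w z.1 * u z ^ 2) :=
    hu.integrable_mul_sq (hw.comp continuous_fst)
  have hgrad : Integrable (fun z => w z.1 * ‖(fderiv ℝ u z).comp (.inr ℝ _ _)‖ ^ 2) :=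
    hu.integrable_mul_norm_fderiv_comp_sq (hw.comp continuous_fst) _
  rw [Measure.volume_eq_prod] at *
  rw [integral_prod _ hmass, integral_prod _ hgrad, ← integral_const_mul]
  refine integral_mono (hmass.integral_prod_left.const_mul _) hgrad.integral_prod_left fun x => ?_
  simp only [integral_const_mul, ← fderiv_slice_right hdiff]
  rw [mul_left_comm]
  exact mul_le_mul_of_nonneg_left (dirichletMu1_mul_integral_sq_le (hu.slice_right x)) (hw0 x)

theorem schrodingerE1_mul_integral_sq_le_prod (hs : 0 ≤ s) {σ : ℝ} (hσ : 0 ≤ σ)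
    (hu : IsTestFunction (Ω₁ ×ˢ Ω₂) u) :
    schrodingerE1 d₁ s σ Ω₁ * ∫ z, u z ^ 2 ≤
      (∫ z, ‖(fderiv ℝ u z).comp (.inl ℝ _ _)‖ ^ 2) + σ * ∫ z, ‖z.1‖ ^ (2 * s) * u z ^ 2 := by
  have hdiff : Differentiable ℝ u := hu.contDiff.differentiable (by simp)
  have hmass : Integrable fun z => u z ^ 2 := hu.integrable_sq
  have hgrad : Integrable fun z => ‖(fderiv ℝ u z).comp (.inl ℝ _ _)‖ ^ 2 := by
    simpa only [one_mul] using
      hu.integrable_mul_norm_fderiv_comp_sq (w := fun _ => 1) continuous_const (.inl ℝ _ _)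
  have hpot : Integrable fun z => ‖z.1‖ ^ (2 * s) * u z ^ 2 :=
    hu.integrable_mul_sq ((continuous_norm_rpow (mul_nonneg zero_le_two hs)).comp continuous_fst)
  rw [Measure.volume_eq_prod] at *
  rw [integral_prod_symm _ hmass, integral_prod_symm _ hgrad, integral_prod_symm _ hpot,
    ← integral_const_mul, ← integral_const_mul,
    ← integral_add hgrad.integral_prod_right (hpot.integral_prod_right.const_mul σ)]
  refine integral_mono (hmass.integral_prod_right.const_mul _)
    (hgrad.integral_prod_right.add (hpot.integral_prod_right.const_mul σ)) fun y => ?_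
  simp only [← fderiv_slice_left hdiff]
  exact schrodingerE1_mul_integral_sq_le hs hσ (hu.slice_left y)

theorem schrodingerE1_dirichletMu1_le_grushinLambda1_prod (hs : 0 ≤ s) (hΩ₁ : IsOpen Ω₁)
    (hne₁ : Ω₁.Nonempty) (hΩ₂ : IsOpen Ω₂) (hne₂ : Ω₂.Nonempty) :
    schrodingerE1 d₁ s (dirichletMu1 d₂ Ω₂) Ω₁ ≤ grushinLambda1 d₁ d₂ s (Ω₁ ×ˢ Ω₂) := by
  rw [grushinLambda1_eq_rayleighInf hs]
  refine le_rayleighInf (hΩ₁.prod hΩ₂) (hne₁.prod hne₂) fun u hu => ?_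
  refine (schrodingerE1_mul_integral_sq_le_prod hs dirichletMu1_nonneg hu).trans ?_
  gcongr
  exact dirichletMu1_mul_integral_weight_mul_sq_le hu
    (continuous_norm_rpow (mul_nonneg zero_le_two hs)) fun x => by positivity

end Grushin

section Exponents

theorem rpow_add_mul_div_rpow {x y p q : ℝ} (hx : 0 ≤ x) (hy : 0 ≤ y) (hp : p ≠ 0)
    (hpq : p + q ≠ 0) : x ^ (p + q) * (y / x) ^ q = x ^ p * y ^ q := by
  obtain rfl | hx := hx.eq_or_lt
  · rw [Real.zero_rpow hpq, Real.zero_rpow hp, zero_mul, zero_mul]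
  · rw [Real.div_rpow hy hx.le, Real.rpow_add hx, mul_assoc,
      mul_div_cancel₀ _ (Real.rpow_pos_of_pos hx q).ne']

variable {a b s : ℝ}

theorem one_div_sub_div_add_mul (ha : 0 < a) (hb : 0 < b) (hs : 0 ≤ s) :
    1 / (s + 1) - b / (a + (1 + s) * b) = a / ((s + 1) * (a + (1 + s) * b)) := by
  field_simp
  ring

theorem grushin_lower_bound_constant_eq {w μ₁ μ₂ v₁ v₂ : ℝ} (ha : 0 < a) (hb : 0 < b) (hs : 0 ≤ s)
    (hw : 0 ≤ w) (hμ₁ : 0 ≤ μ₁) (hμ₂ : 0 ≤ μ₂) (hv₁ : 0 ≤ v₁) (hv₂ : 0 ≤ v₂) {p : ℝ}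
    (hp : p = b / (a + (1 + s) * b)) :
    (μ₂ * v₂ ^ (-2 / b)) ^ p *
        (p / (1 - p) * (w * μ₁ * v₁ ^ (-(2 * s + 2) / a))) ^ (1 / (s + 1) - p) =
      μ₂ ^ (1 / (s + 1)) * (v₁ * v₂) ^ (-2 / (a + (1 + s) * b)) *
        (w * b * μ₁ / ((a + s * b) * μ₂)) ^ (a / ((s + 1) * (a + (1 + s) * b))) := by
  have hD : 0 < a + (1 + s) * b := by positivity
  have hq : 1 / (s + 1) - p = a / ((s + 1) * (a + (1 + s) * b)) :=
    hp ▸ one_div_sub_div_add_mul ha hb hs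
  have hodds : p / (1 - p) = b / (a + s * b) := by
    have : 1 - p = (a + s * b) / (a + (1 + s) * b) := by
      rw [hp]
      field_simp
      ring
    rw [this, hp, div_div_div_cancel_right₀ hD.ne']
  have hvol₁ : (v₁ ^ (-(2 * s + 2) / a)) ^ (1 / (s + 1) - p) =
      v₁ ^ (-2 / (a + (1 + s) * b)) := by
    rw [hq, ← Real.rpow_mul hv₁]
    congr 1
    field_simp
  have hvol₂ : (v₂ ^ (-2 / b)) ^ p = v₂ ^ (-2 / (a + (1 + s) * b)) := by
    rw [hp, ← Real.rpow_mul hv₂, div_mul_div_cancel₀ hb.ne']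
  set K := w * b * μ₁ / (a + s * b) with hK
  have hK0 : 0 ≤ K := by positivity
  calc (μ₂ * v₂ ^ (-2 / b)) ^ p *
        (p / (1 - p) * (w * μ₁ * v₁ ^ (-(2 * s + 2) / a))) ^ (1 / (s + 1) - p)
      = (μ₂ * v₂ ^ (-2 / b)) ^ p * (K * v₁ ^ (-(2 * s + 2) / a)) ^ (1 / (s + 1) - p) := by
        rw [hodds, hK]
        ring_nf
    _ = μ₂ ^ p * K ^ (1 / (s + 1) - p) * (v₁ * v₂) ^ (-2 / (a + (1 + s) * b)) := by
        rw [Real.mul_rpow hμ₂ (by positivity), Real.mul_rpow hK0 (by positivity), hvol₁, hvol₂,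
          Real.mul_rpow hv₁ hv₂]
        ring
    _ = _ := by
        rw [← rpow_add_mul_div_rpow hμ₂ hK0 (by rw [hp]; positivity)
          (by rw [add_sub_cancel]; positivity), add_sub_cancel, hq, hK, div_div]
        ring

end Exponents

theorem grushin_lambda1_global_lower_bound_general {d₁ d₂ : ℕ} (hd₁ : 1 ≤ d₁) (hd₂ : 1 ≤ d₂)
    {s : ℝ} (hs : 0 ≤ s) {c₁ : EuclideanSpace ℝ (Fin d₁)} {c₂ : EuclideanSpace ℝ (Fin d₂)}
    {r₁ r₂ : ℝ} (hB₁ : volume (Metric.ball c₁ r₁) = 1) (hB₂ : volume (Metric.ball c₂ r₂) = 1)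
    {Ω₁ : Set (EuclideanSpace ℝ (Fin d₁))} {Ω₂ : Set (EuclideanSpace ℝ (Fin d₂))}
    (hΩ₁ : IsOpen Ω₁) (hne₁ : Ω₁.Nonempty) (hfin₁ : volume Ω₁ ≠ ∞)
    (hΩ₂ : IsOpen Ω₂) (hne₂ : Ω₂.Nonempty) (hfin₂ : volume Ω₂ ≠ ∞) :
    dirichletMu1 d₂ (Metric.ball c₂ r₂) ^ (1 / (s + 1)) *
        ((volume Ω₁).toReal * (volume Ω₂).toReal) ^ (-2 / (d₁ + (1 + s) * d₂)) *
        schrodingerE1 d₁ s 1 univ *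
        (tau d₁ ^ (2 * s / d₁) * d₂ * dirichletMu1 d₁ (Metric.ball c₁ r₁) /
            ((d₁ + s * d₂) * dirichletMu1 d₂ (Metric.ball c₂ r₂))) ^
          (d₁ / ((s + 1) * (d₁ + (1 + s) * d₂))) ≤
      grushinLambda1 d₁ d₂ s (Ω₁ ×ˢ Ω₂) := by
  have : NeZero d₁ := ⟨by lia⟩
  have : NeZero d₂ := ⟨by lia⟩
  have ha : (0 : ℝ) < d₁ := by exact_mod_cast hd₁
  have hb : (0 : ℝ) < d₂ := by exact_mod_cast hd₂
  obtain ⟨p, hp⟩ : ∃ p : ℝ, p = d₂ / (d₁ + (1 + s) * d₂) := ⟨_, rfl⟩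
  have hp0 : 0 ≤ p := by rw [hp]; positivity
  have hp1 : p < 1 := by rw [hp, div_lt_one (by positivity)]; nlinarith [mul_nonneg hs hb.le]
  have hps : 0 ≤ 1 / (s + 1) - p := by
    rw [hp, one_div_sub_div_add_mul ha hb hs]; positivity
  have hE : 0 ≤ schrodingerE1 d₁ s 1 univ := schrodingerE1_nonneg hs zero_le_one
  have hμ₁ : 0 ≤ dirichletMu1 d₁ (Metric.ball c₁ r₁) := dirichletMu1_nonneg
  have hμ₂ : 0 ≤ dirichletMu1 d₂ (Metric.ball c₂ r₂) := dirichletMu1_nonneg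
  have hτ : 0 ≤ tau d₁ ^ (2 * s / d₁) := Real.rpow_nonneg tau_pos.le _
  rw [mul_right_comm _ (schrodingerE1 d₁ s 1 univ), ← grushin_lower_bound_constant_eq ha hb hs hτ
    hμ₁ hμ₂ ENNReal.toReal_nonneg ENNReal.toReal_nonneg hp]
  refine le_trans ?_ (schrodingerE1_dirichletMu1_le_grushinLambda1_prod hs hΩ₁ hne₁ hΩ₂ hne₂)
  refine le_trans ?_ (le_schrodingerE1_of_volume_ball_eq_one hs dirichletMu1_nonneg hp0
    (sub_nonneg.1 hps) hp1 hΩ₁ hne₁ hfin₁ hB₁)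
  gcongr
  exact dirichletMu1_ball_mul_volume_rpow_le hΩ₂ hne₂ hfin₂ hB₂

/-- lower bound for the first Grushin eigenvalue of any cartesian product
domain of total volume `V`. -/
theorem grushin_lambda1_global_lower_bound (d₁ d₂ : ℕ) (hd₁ : 1 ≤ d₁) (hd₂ : 1 ≤ d₂)
    (s : ℝ) (hs : 0 < s) (V : ℝ) (hV : 0 < V)
    (rB₁ : ℝ) (hrB₁ : 0 < rB₁)
    (hB₁ : volume (Metric.ball (0 : EuclideanSpace ℝ (Fin d₁)) rB₁) = 1)
    (c₂ : EuclideanSpace ℝ (Fin d₂)) (rB₂ : ℝ) (hrB₂ : 0 < rB₂)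
    (hB₂ : volume (Metric.ball c₂ rB₂) = 1)
    (Ω₁ : Set (EuclideanSpace ℝ (Fin d₁))) (Ω₂ : Set (EuclideanSpace ℝ (Fin d₂)))
    (hΩ₁open : IsOpen Ω₁) (hΩ₁conn : IsConnected Ω₁) (hΩ₁bd : Bornology.IsBounded Ω₁)
    (hΩ₂open : IsOpen Ω₂) (hΩ₂conn : IsConnected Ω₂) (hΩ₂bd : Bornology.IsBounded Ω₂)
    (hvol : (volume Ω₁).toReal * (volume Ω₂).toReal = V) :
    grushinLambda1 d₁ d₂ s (Ω₁ ×ˢ Ω₂) ≥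
      dirichletMu1 d₂ (Metric.ball c₂ rB₂) ^ (1 / (s + 1)) *
        V ^ (-(2 : ℝ) / ((d₁ : ℝ) + (1 + s) * (d₂ : ℝ))) *
        schrodingerE1 d₁ s 1 (Set.univ : Set (EuclideanSpace ℝ (Fin d₁))) *
        (tau d₁ ^ (2 * s / (d₁ : ℝ)) * (d₂ : ℝ) *
            dirichletMu1 d₁ (Metric.ball (0 : EuclideanSpace ℝ (Fin d₁)) rB₁) /
            (((d₁ : ℝ) + s * (d₂ : ℝ)) * dirichletMu1 d₂ (Metric.ball c₂ rB₂))) ^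
          ((d₁ : ℝ) / ((s + 1) * ((d₁ : ℝ) + (1 + s) * (d₂ : ℝ)))) := by
  subst hvol
  exact grushin_lambda1_global_lower_bound_general hd₁ hd₂ hs.le hB₁ hB₂
    hΩ₁open hΩ₁conn.nonempty hΩ₁bd.measure_lt_top.ne
    hΩ₂open hΩ₂conn.nonempty hΩ₂bd.measure_lt_top.ne
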